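/- Let k be a field, n ≥ 1 and d ≥ 1 natural numbers, and let I be a proper ideal of the polynomial ring k[x_1,…,x_n] generated by polynomials of total degree at most d. If I is prime up to max{(2d)^(2^(3n²+2n)), (2nd)^(n(n+1)²·2^(4n+6))}, then I is a prime ideal. -/

import Mathlib

/-!
After passing from `k` to `k(t)`, the field may be assumed infinite. Hermann's degree bounds for
polynomial linear systems then have two consequences. First, if `I` is prime up to a large bound,
then a polynomial of small degree is either in `I` or a nonzerodivisor modulo `I`, whatever the
degree of the other factor. Second, if the variables are split into two groups `U` and `y`, linear
relations over `k[U]` modulo `I` can be chosen with coefficients of bounded degree.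

Let `U` be a maximal set of variables that is algebraically independent modulo `I`. The ring
`L = k(U)[y] / I k(U)[y]` is nonzero and finite-dimensional over `k(U)`, with a basis `v` of
monomials, whose structure constants have numerators of small degree over a common denominator `s`
of small degree. As polynomials in `U` are nonzerodivisors modulo `I`, the ring `k[U, y] / I` embeds
into `L`, so it is a domain as soon as `L` is a field.

Suppose that `L` has a proper nonzero ideal `J`. The norm form `det (∑ Tᵢ vᵢ)` of `L` is the product
of the determinants of the actions on `J` and on `L / J`. By Gauss's lemma the primitive part of the
determinant form of `L / J` has coefficients of small degree, like the norm form itself. As `L / J`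
has smaller dimension than `L`, counting coefficients gives a nonzero `α` of small degree such that
`∑ αᵢ vᵢ` vanishes in `L / J` to high order at a point of `U`-space. There the determinant form at
`α` vanishes to an order larger than its degree, so it is zero and `∑ αᵢ vᵢ` is not a unit. It is
therefore a nonzero zero divisor of small degree in `L`, which contradicts the first consequence
above.
-/

namespace PrimeUpTo

section DegreeFiltration

variable {R : Type*} [CommRing R]

section Determinant

open Matrix

variable {S α : Type*} [SetLike S R] [AddSubgroupClass S R] [Fintype α] [DecidableEq α]
  (F : ℕ → S) [SetLike.GradedMonoid F] {a : ℕ}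

lemma det_mem_graded {M : Matrix α α R} (hM : ∀ i j, M i j ∈ F a) :
    M.det ∈ F (Fintype.card α * a) := by
  rw [det_apply]
  refine sum_mem fun σ _ => zsmul_mem ?_ _
  have h := SetLike.prod_mem_graded F (fun _ => a) (fun i => M (σ i) i) (F := .univ)
    fun i _ => hM (σ i) i
  rwa [Finset.sum_const, Finset.card_univ, smul_eq_mul] at h

lemma cramer_mem_graded {M : Matrix α α R} {b : α → R} (hM : ∀ i j, M i j ∈ F a)
    (hb : ∀ i, b i ∈ F a) (i : α) : M.cramer b i ∈ F (Fintype.card α * a) := by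
  rw [cramer_apply]
  refine det_mem_graded F fun j l => ?_
  rw [updateCol_apply]
  split_ifs
  exacts [hb j, hM j l]

end Determinant

/-- A degree filtration on a commutative ring: `F t` is thought of as the group of elements of
degree at most `t`. -/
class IsDegreeFiltration (F : ℕ → AddSubgroup R) : Prop extends SetLike.GradedMonoid F where
  mono : Monotone F

namespace IsDegreeFiltration

variable (F : ℕ → AddSubgroup R) [IsDegreeFiltration F]

lemma mem_of_le {a b : ℕ} (h : a ≤ b) {x : R} (hx : x ∈ F a) : x ∈ F b :=
  mono h hx

lemma aeval_mem {A σ : Type*} [CommSemiring A] [Algebra A R] (hF : ∀ a, algebraMap A R a ∈ F 0)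
    {f : σ → R} (hf : ∀ i, f i ∈ F 1) (p : MvPolynomial σ A) :
    MvPolynomial.aeval f p ∈ F p.totalDegree := by
  rw [MvPolynomial.aeval_def, MvPolynomial.eval₂_eq]
  refine sum_mem fun γ hγ => mem_of_le F (MvPolynomial.le_totalDegree hγ) ?_
  have hprod := SetLike.prod_mem_graded F γ (fun i => f i ^ γ i) (F := γ.support)
    fun i _ => by simpa using SetLike.pow_mem_graded (γ i) (hf i)
  simpa [Finsupp.sum] using SetLike.mul_mem_graded (hF (p.coeff γ)) hprod

end IsDegreeFiltration

/-- The filtration of `R[x_i : i ∈ σ]` by total degree. -/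
noncomputable def totalDegreeFiltration (σ R : Type*) [CommRing R] (t : ℕ) :
    AddSubgroup (MvPolynomial σ R) :=
  (MvPolynomial.restrictTotalDegree σ R t).toAddSubgroup

lemma mem_totalDegreeFiltration {σ : Type*} {t : ℕ} {p : MvPolynomial σ R} :
    p ∈ totalDegreeFiltration σ R t ↔ p.totalDegree ≤ t :=
  MvPolynomial.mem_restrictTotalDegree σ t p

instance (σ : Type*) : IsDegreeFiltration (totalDegreeFiltration σ R) where
  one_mem := by simp [mem_totalDegreeFiltration]
  mul_mem _ _ _ _ hp hq := by
    rw [mem_totalDegreeFiltration] at *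
    exact (MvPolynomial.totalDegree_mul _ _).trans (add_le_add hp hq)
  mono _ _ hab p hp := by
    rw [mem_totalDegreeFiltration] at *
    exact hp.trans hab

/-- The filtration of `R[x_i : i ∈ σ]` induced by a filtration `F` of `R`: only the size of the
coefficients is measured, the degree in the variables `x_i` is ignored. -/
noncomputable def coeffFiltration (σ : Type*) (F : ℕ → AddSubgroup R) (t : ℕ) :
    AddSubgroup (MvPolynomial σ R) :=
  ⨅ γ : σ →₀ ℕ, (F t).comap (MvPolynomial.lcoeff R γ).toAddMonoidHom

lemma mem_coeffFiltration {σ : Type*} {F : ℕ → AddSubgroup R} {t : ℕ} {p : MvPolynomial σ R} :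
    p ∈ coeffFiltration σ F t ↔ ∀ γ, p.coeff γ ∈ F t := by
  simp [coeffFiltration, AddSubgroup.mem_iInf]

instance (σ : Type*) (F : ℕ → AddSubgroup R) [IsDegreeFiltration F] :
    IsDegreeFiltration (coeffFiltration σ F) where
  one_mem := mem_coeffFiltration.2 fun γ => by
    classical
    rw [MvPolynomial.coeff_one]
    split_ifs
    exacts [SetLike.one_mem_graded F, zero_mem _]
  mul_mem _ _ _ _ hp hq := by
    classical
    rw [mem_coeffFiltration] at *
    intro γ
    rw [MvPolynomial.coeff_mul]
    exact sum_mem fun x _ => SetLike.mul_mem_graded (hp _) (hq _)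
  mono _ _ hab p hp := by
    rw [mem_coeffFiltration] at *
    exact fun γ => IsDegreeFiltration.mem_of_le F hab (hp γ)

end DegreeFiltration

section MaximalMinor

open Matrix

variable {A ι κ α : Type*} [CommRing A]

/-- The rows `r` and columns `c` of `Q` cut out a nonvanishing minor of maximal size; the maximality
is expressed by saying that a vector killed by the rows `r` is killed by all the rows of `Q`. -/
structure IsMaximalMinor [Fintype κ] [Fintype α] [DecidableEq α] (Q : Matrix ι κ A) (r : α → ι)
    (c : α → κ) : Prop where
  det_ne_zero : (Q.submatrix r c).det ≠ 0
  mulVec_eq_zero : ∀ z : κ → A, (∀ a, (Q *ᵥ z) (r a) = 0) → Q *ᵥ z = 0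

lemma exists_submatrix_det_ne_zero {K : Type*} [Field K] [Finite ι] [Fintype κ] (M : Matrix ι κ K) :
    ∃ (r : Fin M.rank → ι) (c : Fin M.rank → κ), (M.submatrix r c).det ≠ 0 ∧
      Submodule.span K (Set.range (M.row ∘ r)) = Submodule.span K (Set.range M.row) := by
  have := Fintype.ofFinite ι
  obtain ⟨α, a, ha, hspan, hrows⟩ := exists_linearIndependent' K M.row
  have : Finite α := .of_injective a ha
  have : Fintype α := .ofFinite α
  have hrank : (M.submatrix a id).rank = Fintype.card α := LinearIndependent.rank_matrix hrows
  obtain ⟨β, b, hb, hspan', hcols⟩ := exists_linearIndependent' K (M.submatrix a id).col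
  have : Finite β := .of_injective b hb
  have : Fintype β := .ofFinite β
  have hα : Fintype.card α = M.rank := by
    rw [linearIndependent_iff_card_eq_finrank_span.mp hrows, Set.finrank, hspan,
      rank_eq_finrank_span_row]
  have hβ : Fintype.card β = M.rank := by
    rw [linearIndependent_iff_card_eq_finrank_span.mp hcols, Set.finrank, hspan', ← hα, ← hrank,
      rank_eq_finrank_span_cols]
  let eα : Fin M.rank ≃ α := (Fintype.equivFinOfCardEq hα).symm
  let eβ : Fin M.rank ≃ β := (Fintype.equivFinOfCardEq hβ).symm
  refine ⟨a ∘ eα, b ∘ eβ, ?_, ?_⟩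
  · rw [← isUnit_iff_ne_zero, ← isUnit_iff_isUnit_det, ← linearIndependent_cols_iff_isUnit]
    exact (hcols.comp eβ eβ.injective).map' (LinearEquiv.funCongrLeft K K eα).toLinearMap
      (LinearEquiv.ker _)
  · rw [← Function.comp_assoc, eα.surjective.range_comp, hspan]

lemma exists_isMaximalMinor [IsDomain A] [Finite ι] [Fintype κ] (Q : Matrix ι κ A) :
    ∃ (N : ℕ) (r : Fin N → ι) (c : Fin N → κ), IsMaximalMinor Q r c := by
  let K := FractionRing A
  obtain ⟨r, c, hdet, hspan⟩ := exists_submatrix_det_ne_zero (Q.map (algebraMap A K))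
  refine ⟨_, r, c, fun h0 => hdet ?_, fun z hz => ?_⟩
  · rw [submatrix_map, ← RingHom.mapMatrix_apply, ← RingHom.map_det, h0, map_zero]
  · let ψ : (κ → K) →ₗ[K] K := Fintype.linearCombination K (algebraMap A K ∘ z)
    have hψ (i : ι) : ψ ((Q.map (algebraMap A K)).row i) = algebraMap A K ((Q *ᵥ z) i) := by
      simp [ψ, Fintype.linearCombination_apply, mulVec, dotProduct]
    have hle : Submodule.span K (Set.range (Q.map (algebraMap A K)).row) ≤ LinearMap.ker ψ := by
      rw [← hspan, Submodule.span_le]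
      rintro _ ⟨a, rfl⟩
      exact (hψ (r a)).trans (by rw [hz a, map_zero])
    funext i
    apply IsFractionRing.injective A K
    rw [← hψ, hle (Submodule.subset_span ⟨i, rfl⟩), Pi.zero_apply, map_zero]

variable [Fintype α] [DecidableEq α] [DecidableEq κ]

/-- The candidate given by Cramer's rule for a solution of `Q x = det • v`, where `det` is the minor
of `Q` with rows `r` and columns `c`; its entries outside `c` vanish. -/
def cramerMap (Q : Matrix ι κ A) (r : α → ι) (c : α → κ) : (ι → A) →ₗ[A] (κ → A) :=
  Fintype.linearCombination A (fun a => (Pi.single (c a) 1 : κ → A)) ∘ₗ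
    (Q.submatrix r c).cramer ∘ₗ LinearMap.funLeft A A r

/-- With `det` the minor of `Q` with rows `r` and columns `c`, this map sends `x` to `det • x` minus
the Cramer solution of the system that `det • x` solves. -/
def kernelMap [Fintype κ] (Q : Matrix ι κ A) (r : α → ι) (c : α → κ) : (κ → A) →ₗ[A] (κ → A) :=
  (Q.submatrix r c).det • LinearMap.id - cramerMap Q r c ∘ₗ Q.mulVecLin

section Cramer

variable {Q : Matrix ι κ A} {r : α → ι} {c : α → κ}

lemma cramerMap_apply (v : ι → A) (j : κ) :
    cramerMap Q r c v j =
      ∑ a, (Q.submatrix r c).cramer (v ∘ r) a * (Pi.single (c a) 1 : κ → A) j := by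
  simp [cramerMap, Fintype.linearCombination_apply, LinearMap.funLeft]

lemma cramerMap_apply_of_notMem {j : κ} (hj : j ∉ Set.range c) (v : ι → A) :
    cramerMap Q r c v j = 0 := by
  rw [cramerMap_apply]
  refine Finset.sum_eq_zero fun a _ => ?_
  rw [Pi.single_eq_of_ne (fun h => hj ⟨a, h.symm⟩), mul_zero]

lemma cramerMap_mem {F : ℕ → AddSubgroup A} [IsDegreeFiltration F] {d : ℕ}
    (hQ : ∀ i j, Q i j ∈ F d) {v : ι → A} (hv : ∀ i, v i ∈ F d) (j : κ) :
    cramerMap Q r c v j ∈ F (Fintype.card α * d) := by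
  rw [cramerMap_apply]
  refine sum_mem fun a _ => ?_
  rw [Pi.single_apply, mul_ite, mul_one, mul_zero]
  split_ifs
  · exact cramer_mem_graded F (fun _ _ => hQ _ _) (fun _ => hv _) a
  · exact zero_mem _

variable [Fintype κ]

lemma kernelMap_apply (x : κ → A) :
    kernelMap Q r c x = (Q.submatrix r c).det • x - cramerMap Q r c (Q *ᵥ x) :=
  rfl

lemma kernelMap_apply_of_notMem {j : κ} (hj : j ∉ Set.range c) (x : κ → A) :
    kernelMap Q r c x j = (Q.submatrix r c).det * x j := by
  simp [kernelMap_apply, cramerMap_apply_of_notMem hj]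

lemma mulVec_cramerMap_apply (v : ι → A) (a : α) :
    (Q *ᵥ cramerMap Q r c v) (r a) = (Q.submatrix r c).det * v (r a) := by
  have hsub : (Q *ᵥ cramerMap Q r c v) (r a) =
      (Q.submatrix r c *ᵥ (Q.submatrix r c).cramer (v ∘ r)) a := by
    simp only [cramerMap, LinearMap.comp_apply, Fintype.linearCombination_apply, mulVec_sum,
      mulVec_smul, mulVec_single_one, Finset.sum_apply]
    exact Finset.sum_congr rfl fun _ _ => mul_comm _ _
  rw [hsub, mulVec_cramer, Pi.smul_apply, Function.comp_apply, smul_eq_mul]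

lemma kernelMap_single (a : α) : kernelMap Q r c (Pi.single (c a) 1) = 0 := by
  have hcol : (Q.col (c a)) ∘ r = (Q.submatrix r c).col a := rfl
  have hcramer : (Q.submatrix r c).cramer ((Q.submatrix r c).col a) =
      (Q.submatrix r c).det • Pi.single a 1 := by
    rw [← mulVec_single_one, cramer_eq_adjugate_mulVec, mulVec_mulVec, adjugate_mul, smul_mulVec,
      one_mulVec]
  rw [kernelMap_apply, mulVec_single_one, sub_eq_zero]
  funext j
  rw [cramerMap_apply, hcol, hcramer, Finset.sum_eq_single a] <;> simp +contextual

lemma kernelMap_eq_sum (x : κ → A) :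
    kernelMap Q r c x = ∑ j, x j • kernelMap Q r c (Pi.single j 1) := by
  conv_lhs => rw [pi_eq_sum_univ' x, map_sum]
  simp only [map_smul]

lemma kernelMap_single_mem {F : ℕ → AddSubgroup A} [IsDegreeFiltration F] {d : ℕ}
    (hQ : ∀ i j, Q i j ∈ F d) (j l : κ) :
    kernelMap Q r c (Pi.single j 1) l ∈ F (Fintype.card α * d) := by
  rw [kernelMap_apply, mulVec_single_one]
  refine sub_mem ?_ (cramerMap_mem hQ (fun i => hQ i j) l)
  rw [Pi.smul_apply, Pi.single_apply, smul_ite, smul_zero, smul_eq_mul, mul_one]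
  split_ifs
  · exact det_mem_graded F fun _ _ => hQ _ _
  · exact zero_mem _

end Cramer

namespace IsMaximalMinor

variable [Fintype κ] {Q : Matrix ι κ A} {r : α → ι} {c : α → κ} (h : IsMaximalMinor Q r c)
include h

omit [DecidableEq κ] in
lemma card_le [Fintype ι] : Fintype.card α ≤ Fintype.card ι := by
  refine Fintype.card_le_of_injective r fun a b hab => ?_
  by_contra hne
  exact h.det_ne_zero (det_zero_of_row_eq hne (by ext; simp [hab]))

lemma mulVec_cramerMap_of_smul_eq [IsDomain A] {v : ι → A} {x : κ → A} {s : A} (hs : s ≠ 0)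
    (hx : Q *ᵥ x = s • v) : Q *ᵥ cramerMap Q r c v = (Q.submatrix r c).det • v := by
  have hker : Q *ᵥ (s • cramerMap Q r c v - (Q.submatrix r c).det • x) = 0 := by
    refine h.mulVec_eq_zero _ fun a => ?_
    simp only [mulVec_sub, mulVec_smul, hx, Pi.sub_apply, Pi.smul_apply, smul_eq_mul,
      mulVec_cramerMap_apply]
    ring
  rw [mulVec_sub, mulVec_smul, mulVec_smul, hx, smul_comm _ s, ← smul_sub] at hker
  exact sub_eq_zero.1 ((smul_eq_zero.1 hker).resolve_left hs)

lemma mulVec_kernelMap [IsDomain A] (x : κ → A) : Q *ᵥ kernelMap Q r c x = 0 := by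
  rw [kernelMap_apply, mulVec_sub, mulVec_smul,
    h.mulVec_cramerMap_of_smul_eq one_ne_zero (one_smul A _).symm, sub_self]

end IsMaximalMinor

lemma exists_mulVec_eq_smul_of_mem {A ι κ : Type*} [CommRing A] [IsDomain A] [Fintype ι]
    [Fintype κ] (F : ℕ → AddSubgroup A)
    [IsDegreeFiltration F] {Q : Matrix ι κ A} {b : ι → A} {d : ℕ} (hQ : ∀ i j, Q i j ∈ F d)
    (hb : ∀ i, b i ∈ F d) {g : κ → A} {s : A} (hs : s ≠ 0) (hg : Q *ᵥ g = s • b) :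
    ∃ (s' : A) (x : κ → A), s' ≠ 0 ∧ s' ∈ F (Fintype.card ι * d) ∧
      (∀ j, x j ∈ F (Fintype.card ι * d)) ∧ Q *ᵥ x = s' • b := by
  classical
  obtain ⟨N, r, c, h⟩ := exists_isMaximalMinor Q
  have hle := Nat.mul_le_mul_right d h.card_le
  exact ⟨_, cramerMap Q r c b, h.det_ne_zero,
    IsDegreeFiltration.mem_of_le F hle (det_mem_graded F fun _ _ => hQ _ _),
    fun j => IsDegreeFiltration.mem_of_le F hle (cramerMap_mem hQ hb j),
    h.mulVec_cramerMap_of_smul_eq hs hg⟩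

end MaximalMinor

section Shear

open MvPolynomial

lemma totalDegree_X_le {σ R : Type*} [CommSemiring R] (i : σ) :
    (X i : MvPolynomial σ R).totalDegree ≤ 1 :=
  (totalDegree_monomial_le _ _).trans (by simp)

lemma totalDegree_aeval_le {σ τ R : Type*} [CommRing R] {f : σ → MvPolynomial τ R}
    (hf : ∀ i, (f i).totalDegree ≤ 1) (p : MvPolynomial σ R) :
    (aeval f p).totalDegree ≤ p.totalDegree :=
  mem_totalDegreeFiltration.1 <| IsDegreeFiltration.aeval_mem (totalDegreeFiltration τ R)
    (fun c => mem_totalDegreeFiltration.2 (totalDegree_C c).le)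
    (fun i => mem_totalDegreeFiltration.2 (hf i)) p

lemma eval_smul_of_isHomogeneous {σ R : Type*} [CommSemiring R] {p : MvPolynomial σ R} {δ : ℕ}
    (hp : p.IsHomogeneous δ) (a : R) (c : σ → R) : eval (a • c) p = a ^ δ * eval c p := by
  rw [eval_eq, eval_eq, Finset.mul_sum]
  refine Finset.sum_congr rfl fun γ hγ => ?_
  have hγδ : ∑ i ∈ γ.support, γ i = δ := by
    rw [← hp (mem_support_iff.1 hγ), Finsupp.weight_apply]
    simp [Finsupp.sum]
  simp only [Pi.smul_apply, smul_eq_mul, mul_pow, Finset.prod_mul_distrib,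
    Finset.prod_pow_eq_pow_sum, hγδ]
  ring

lemma homogeneousComponent_totalDegree_ne_zero {σ R : Type*} [CommSemiring R]
    {p : MvPolynomial σ R} (hp : p ≠ 0) : homogeneousComponent p.totalDegree p ≠ 0 := by
  obtain ⟨γ, hγ, hdeg⟩ := Finset.exists_mem_eq_sup p.support (support_nonempty.2 hp) Finsupp.degree
  rw [ne_zero_iff]
  refine ⟨γ, ?_⟩
  rw [coeff_homogeneousComponent, if_pos (hdeg.symm.trans (by rfl))]
  exact mem_support_iff.1 hγ

lemma coeff_aeval_line {σ R : Type*} [CommSemiring R] (c : σ → R) (p : MvPolynomial σ R) (δ : ℕ) :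
    (aeval (fun i => Polynomial.C (c i) * Polynomial.X) p : Polynomial R).coeff δ =
      eval c (homogeneousComponent δ p) := by
  classical
  induction p using MvPolynomial.induction_on' with
  | monomial γ a =>
    have hprod : (γ.prod fun i k => (Polynomial.C (c i) * Polynomial.X : Polynomial R) ^ k) =
        Polynomial.C (γ.prod fun i k => c i ^ k) * Polynomial.X ^ γ.degree := by
      simp only [mul_pow, Finsupp.prod, Finset.prod_mul_distrib, map_prod, map_pow,
        Finset.prod_pow_eq_pow_sum]
      rfl
    rw [homogeneousComponent_of_mem (isHomogeneous_monomial a rfl : IsHomogeneous _ γ.degree),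
      aeval_monomial, hprod, Polynomial.algebraMap_eq, ← mul_assoc, ← map_mul,
      Polynomial.coeff_C_mul_X_pow]
    split_ifs <;> simp [eval_monomial]
  | add p q hp hq => simp [hp, hq]

variable {n : ℕ} {R : Type*} [CommRing R]

/-- The algebra map with `X₀ ↦ X₀` and `Xᵢ₊₁ ↦ Xᵢ₊₁ + cᵢ X₀`. -/
noncomputable def shearHom (c : Fin n → R) :
    MvPolynomial (Fin (n + 1)) R →ₐ[R] MvPolynomial (Fin (n + 1)) R :=
  aeval (Fin.cons (X 0) fun i => X i.succ + C (c i) * X 0)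

@[simp]
lemma shearHom_X_zero (c : Fin n → R) : shearHom c (X 0) = X 0 := by
  simp [shearHom]

@[simp]
lemma shearHom_X_succ (c : Fin n → R) (i : Fin n) :
    shearHom c (X i.succ) = X i.succ + C (c i) * X 0 := by
  simp [shearHom]

lemma shearHom_comp (a b : Fin n → R) : (shearHom a).comp (shearHom b) = shearHom (a + b) := by
  ext i : 1
  refine Fin.cases (by simp) (fun i => ?_) i
  simp [algHom_C]
  ring

lemma shearHom_zero : shearHom (0 : Fin n → R) = AlgHom.id R _ := by
  ext i : 1
  refine Fin.cases ?_ (fun i => ?_) i <;> simp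

/-- The linear change of coordinates `shearHom c`, with inverse `shearHom (-c)`. -/
noncomputable def shear (c : Fin n → R) :
    MvPolynomial (Fin (n + 1)) R ≃ₐ[R] MvPolynomial (Fin (n + 1)) R :=
  .ofAlgHom (shearHom c) (shearHom (-c))
    (by rw [shearHom_comp, add_neg_cancel, shearHom_zero])
    (by rw [shearHom_comp, neg_add_cancel, shearHom_zero])

lemma totalDegree_shearHom_le (c : Fin n → R) (p : MvPolynomial (Fin (n + 1)) R) :
    (shearHom c p).totalDegree ≤ p.totalDegree := by
  refine totalDegree_aeval_le (fun i => Fin.cases (totalDegree_X_le 0) (fun i => ?_) i) p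
  refine (totalDegree_add _ _).trans (max_le (totalDegree_X_le _) ?_)
  exact (totalDegree_mul _ _).trans (by simpa using totalDegree_X_le 0)

lemma totalDegree_shear_le (c : Fin n → R) (p : MvPolynomial (Fin (n + 1)) R) :
    (shear c p).totalDegree ≤ p.totalDegree :=
  totalDegree_shearHom_le c p

lemma totalDegree_shear_symm_le (c : Fin n → R) (p : MvPolynomial (Fin (n + 1)) R) :
    ((shear c).symm p).totalDegree ≤ p.totalDegree :=
  totalDegree_shearHom_le (-c) p

lemma map_eval_zero_finSuccEquiv_shear (c : Fin n → R) (p : MvPolynomial (Fin (n + 1)) R) :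
    (finSuccEquiv R n (shear c p)).map (eval (0 : Fin n → R)) =
      aeval (fun i => Polynomial.C ((Fin.cons 1 c : Fin (n + 1) → R) i) * Polynomial.X) p := by
  let ψ : MvPolynomial (Fin (n + 1)) R →ₐ[R] Polynomial R :=
    ((Polynomial.mapAlgHom (aeval (0 : Fin n → R))).comp
      (finSuccEquiv R n).toAlgHom).comp (shear c).toAlgHom
  suffices ψ = aeval (fun i => Polynomial.C ((Fin.cons 1 c : Fin (n + 1) → R) i) * Polynomial.X) by
    simpa [ψ] using DFunLike.congr_fun this p
  ext i : 1
  refine Fin.cases ?_ (fun i => ?_) i <;> simp [ψ, shear, finSuccEquiv_apply]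

lemma isUnit_leadingCoeff_finSuccEquiv {k : Type*} [Field k] {p : MvPolynomial (Fin (n + 1)) k}
    {δ : ℕ} (hp : p.totalDegree ≤ δ) (hδ : (finSuccEquiv k n p).coeff δ ≠ 0) :
    IsUnit (finSuccEquiv k n p).leadingCoeff := by
  have hnat : (finSuccEquiv k n p).natDegree = δ :=
    le_antisymm ((natDegree_finSuccEquiv p).trans_le ((degreeOf_le_totalDegree _ _).trans hp))
      (Polynomial.le_natDegree_of_ne_zero hδ)
  have hconst : ((finSuccEquiv k n p).coeff δ).totalDegree = 0 := by
    have := totalDegree_coeff_finSuccEquiv_add_le p δ hδ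
    omega
  rw [totalDegree_eq_zero_iff_eq_C] at hconst
  rw [Polynomial.leadingCoeff, hnat, hconst]
  exact (isUnit_iff_ne_zero.2 fun h => hδ (by rw [hconst, h, C_0])).map C

lemma exists_isUnit_leadingCoeff_shear {k : Type*} [Field k] [Infinite k]
    {p : MvPolynomial (Fin (n + 1)) k} (hp : p ≠ 0) :
    ∃ c : Fin n → k, IsUnit (finSuccEquiv k n (shear c p)).leadingCoeff := by
  set top := homogeneousComponent p.totalDegree p
  obtain ⟨a, ha⟩ : ∃ a : Fin (n + 1) → k, eval a (X 0 * top) ≠ 0 := by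
    by_contra! h
    exact mul_ne_zero (X_ne_zero 0) (homogeneousComponent_totalDegree_ne_zero hp)
      (MvPolynomial.funext fun a => by rw [h a, map_zero])
  rw [eval_mul, eval_X] at ha
  obtain ⟨ha0, htop⟩ := mul_ne_zero_iff.1 ha
  refine ⟨fun i => (a 0)⁻¹ * a i.succ, isUnit_leadingCoeff_finSuccEquiv
    (totalDegree_shear_le _ p) fun h0 => ?_⟩
  have hline : eval (Fin.cons 1 fun i => (a 0)⁻¹ * a i.succ) top = 0 := by
    rw [← coeff_aeval_line, ← map_eval_zero_finSuccEquiv_shear, Polynomial.coeff_map, h0, map_zero]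
  have hcons : (Fin.cons 1 fun i => (a 0)⁻¹ * a i.succ : Fin (n + 1) → k) = (a 0)⁻¹ • a := by
    ext i
    refine Fin.cases ?_ (fun i => ?_) i <;> simp [ha0]
  rw [hcons, eval_smul_of_isHomogeneous (homogeneousComponent_isHomogeneous _ p)] at hline
  exact mul_ne_zero (pow_ne_zero _ (inv_ne_zero ha0)) htop hline

end Shear

section PolynomialFiltration

open Polynomial

variable {R : Type*} [CommRing R]

/-- The filtration of `R[X]` induced by a filtration `F` of `R` when `X` has degree one. The
subtraction `t - i` truncates only where the coefficient vanishes. -/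
def polynomialFiltration (F : ℕ → AddSubgroup R) (t : ℕ) : AddSubgroup R[X] where
  carrier := {p | p.natDegree ≤ t ∧ ∀ i, p.coeff i ∈ F (t - i)}
  zero_mem' := by simp [zero_mem]
  add_mem' hp hq := ⟨natDegree_add_le_of_degree_le hp.1 hq.1,
    fun i => by simpa using add_mem (hp.2 i) (hq.2 i)⟩
  neg_mem' hp := ⟨by simpa using hp.1, fun i => by simpa using neg_mem (hp.2 i)⟩

lemma mem_polynomialFiltration {F : ℕ → AddSubgroup R} {t : ℕ} {p : R[X]} :
    p ∈ polynomialFiltration F t ↔ p.natDegree ≤ t ∧ ∀ i, p.coeff i ∈ F (t - i) :=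
  Iff.rfl

instance (F : ℕ → AddSubgroup R) [IsDegreeFiltration F] :
    IsDegreeFiltration (polynomialFiltration F) where
  one_mem := mem_polynomialFiltration.2 ⟨by simp, fun i => by
    rw [coeff_one]
    split_ifs
    exacts [by simpa using SetLike.one_mem_graded F, zero_mem _]⟩
  mul_mem s t p q hp hq := by
    refine mem_polynomialFiltration.2 ⟨natDegree_mul_le_of_le hp.1 hq.1, fun l => ?_⟩
    rw [coeff_mul]
    refine sum_mem fun x hx => ?_
    rw [Finset.HasAntidiagonal.mem_antidiagonal] at hx
    by_cases hs : s < x.1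
    · simp [coeff_eq_zero_of_natDegree_lt (hp.1.trans_lt hs), zero_mem]
    by_cases ht : t < x.2
    · simp [coeff_eq_zero_of_natDegree_lt (hq.1.trans_lt ht), zero_mem]
    have hst : s - x.1 + (t - x.2) = s + t - l := by omega
    rw [← hst]
    exact SetLike.mul_mem_graded (hp.2 _) (hq.2 _)
  mono _ _ hab _ hp := ⟨hp.1.trans hab,
    fun i => IsDegreeFiltration.mem_of_le F (Nat.sub_le_sub_right hab i) (hp.2 i)⟩

lemma monomial_mem_polynomialFiltration {F : ℕ → AddSubgroup R} {t : ℕ} {a : R}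
    (ha : a ∈ F t) (i : ℕ) :
    monomial i a ∈ polynomialFiltration F (t + i) := by
  refine ⟨(natDegree_monomial_le a).trans (Nat.le_add_left _ _), fun l => ?_⟩
  rw [coeff_monomial]
  split_ifs with h
  · rwa [← h, Nat.add_sub_cancel]
  · exact zero_mem _

lemma finSuccEquiv_mem_polynomialFiltration_iff {n t : ℕ} {p : MvPolynomial (Fin (n + 1)) R} :
    MvPolynomial.finSuccEquiv R n p ∈ polynomialFiltration (totalDegreeFiltration (Fin n) R) t ↔
      p.totalDegree ≤ t := by
  simp only [mem_polynomialFiltration, mem_totalDegreeFiltration]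
  refine ⟨fun ⟨hnat, hcoeff⟩ => ?_, fun hp => ⟨?_, fun i => ?_⟩⟩
  · refine Finset.sup_le fun γ hγ => ?_
    have hγ' : ((MvPolynomial.finSuccEquiv R n p).coeff (γ 0)).coeff γ.tail ≠ 0 := by
      rwa [MvPolynomial.finSuccEquiv_coeff_coeff, Finsupp.cons_tail, ← MvPolynomial.mem_support_iff]
    have htail := (MvPolynomial.le_totalDegree (MvPolynomial.mem_support_iff.2 hγ')).trans
      (hcoeff (γ 0))
    have hhead : γ 0 ≤ t := (le_natDegree_of_ne_zero fun h => hγ' (by simp [h])).trans hnat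
    rw [Finsupp.sum_fintype _ _ fun _ => rfl] at htail ⊢
    rw [Fin.sum_univ_succ]
    simp only [Finsupp.tail_apply] at htail
    omega
  · rw [MvPolynomial.natDegree_finSuccEquiv]
    exact (MvPolynomial.degreeOf_le_totalDegree _ _).trans hp
  · by_cases h0 : (MvPolynomial.finSuccEquiv R n p).coeff i = 0
    · simp [h0]
    · have := MvPolynomial.totalDegree_coeff_finSuccEquiv_add_le p i h0
      omega

end PolynomialFiltration

section BoundedSolution

open Matrix

variable {R ι κ : Type*} [CommRing R] [Fintype κ]

/-- The solutions of the homogeneous linear system with matrix `Q` whose entries have degree at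
most `β`. -/
def boundedKernel (F : ℕ → AddSubgroup R) (β : ℕ) (Q : Matrix ι κ R) : Set (κ → R) :=
  {z | Q *ᵥ z = 0 ∧ ∀ j, z j ∈ F β}

/-- The vector `g` is the sum of a solution of the linear system `Q x = b` of degree at most `β`
and a combination of solutions of degree at most `β` of the homogeneous system. -/
def HasBoundedSolution (F : ℕ → AddSubgroup R) (β : ℕ) (Q : Matrix ι κ R) (b : ι → R) (g : κ → R) :
    Prop :=
  ∃ g₀ : κ → R, Q *ᵥ g₀ = b ∧ (∀ j, g₀ j ∈ F β) ∧ g - g₀ ∈ Submodule.span R (boundedKernel F β Q)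

lemma boundedKernel_mono {F : ℕ → AddSubgroup R} [IsDegreeFiltration F] (Q : Matrix ι κ R) :
    Monotone fun β => boundedKernel F β Q :=
  fun _ _ h _ hz => ⟨hz.1, fun j => IsDegreeFiltration.mem_of_le F h (hz.2 j)⟩

namespace HasBoundedSolution

variable {F : ℕ → AddSubgroup R} {β : ℕ} {Q : Matrix ι κ R} {b : ι → R} {g : κ → R}

lemma mono [IsDegreeFiltration F] {β' : ℕ} (hβ : β ≤ β') (h : HasBoundedSolution F β Q b g) :
    HasBoundedSolution F β' Q b g := by
  obtain ⟨g₀, hQ, hdeg, hspan⟩ := h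
  exact ⟨g₀, hQ, fun j => IsDegreeFiltration.mem_of_le F hβ (hdeg j),
    Submodule.span_mono (boundedKernel_mono Q hβ) hspan⟩

lemma of_sub_mem {g' : κ → R} (h : HasBoundedSolution F β Q b g')
    (hs : g - g' ∈ Submodule.span R (boundedKernel F β Q)) : HasBoundedSolution F β Q b g := by
  obtain ⟨g₀, hQ, hdeg, hspan⟩ := h
  exact ⟨g₀, hQ, hdeg, by simpa using add_mem hs hspan⟩

lemma of_ringEquiv {R' : Type*} [CommRing R'] (e : R ≃+* R') {F' : ℕ → AddSubgroup R'}
    (hF : ∀ x ∈ F' β, e.symm x ∈ F β)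
    (h : HasBoundedSolution F' β (Q.map e) (e ∘ b) (e ∘ g)) : HasBoundedSolution F β Q b g := by
  let T : (κ → R') →ₛₗ[(e.symm : R' →+* R)] (κ → R) :=
    { toFun := fun z => e.symm ∘ z
      map_add' := fun _ _ => by ext; simp
      map_smul' := fun _ _ => by ext; simp }
  have hT (z : κ → R') : Q *ᵥ T z = e.symm ∘ (Q.map e *ᵥ z) := by
    ext
    simp [T, mulVec, dotProduct]
  obtain ⟨g₀, hQ, hdeg, hspan⟩ := h
  refine ⟨T g₀, ?_, fun j => hF _ (hdeg j), ?_⟩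
  · rw [hT, hQ]
    ext
    simp
  · have hle : Submodule.span R' (boundedKernel F' β (Q.map e)) ≤
        (Submodule.span R (boundedKernel F β Q)).comap T := by
      refine Submodule.span_le.2 fun z hz => Submodule.subset_span ⟨?_, fun j => hF _ (hz.2 j)⟩
      rw [hT, hz.1]
      ext
      simp
    have hg : T (e ∘ g) = g := by
      ext
      simp [T]
    have := hle hspan
    rwa [Submodule.mem_comap, map_sub, hg] at this

end HasBoundedSolution

end BoundedSolution

section Reduction

open Matrix Polynomial

variable {R ι κ : Type*} [CommRing R]

lemma exists_natDegree_sub_mul_le {Δ : R[X]} (hΔ : IsUnit Δ.leadingCoeff) (g : R[X]) :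
    ∃ q, (g - q * Δ).natDegree ≤ Δ.natDegree := by
  obtain ⟨u, hu⟩ := hΔ
  have hmonic : (C (↑u⁻¹ : R) * Δ).Monic := by
    rw [Monic, leadingCoeff_C_mul_of_isUnit u⁻¹.isUnit, ← hu, u.inv_mul]
  refine ⟨(g /ₘ (C (↑u⁻¹ : R) * Δ)) * C (↑u⁻¹ : R), ?_⟩
  rw [mul_assoc, mul_comm, ← modByMonic_eq_sub_mul_div]
  exact (natDegree_modByMonic_le _ hmonic).trans (natDegree_C_mul_le _ _)

variable [Fintype κ] {α : Type*} [Fintype α] [DecidableEq α] {Q : Matrix ι κ R[X]}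

/-- The minor times `g` is the Cramer solution for `b` plus a combination, with the entries of `g`
outside `c` as coefficients, of vectors of degree at most `E`. -/
lemma natDegree_le_of_kernelMap [IsDomain R] [DecidableEq κ] {r : α → ι} {c : α → κ} {E : ℕ}
    {b : ι → R[X]} {g : κ → R[X]} (hg : Q *ᵥ g = b) (hdet : (Q.submatrix r c).det ≠ 0)
    (hb : ∀ l, (cramerMap Q r c b l).natDegree ≤ E)
    (hQ : ∀ j l, (kernelMap Q r c (Pi.single j 1) l).natDegree ≤ E)
    (hout : ∀ j ∉ Set.range c, (g j).natDegree ≤ (Q.submatrix r c).det.natDegree) (l : κ) :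
    (g l).natDegree ≤ E := by
  by_cases hgl : g l = 0
  · simp [hgl]
  have hsum : (Q.submatrix r c).det * g l =
      cramerMap Q r c b l + ∑ j, g j * kernelMap Q r c (Pi.single j 1) l := by
    have := congrFun (kernelMap_eq_sum (Q := Q) (r := r) (c := c) g) l
    rw [kernelMap_apply, hg] at this
    simpa [sub_eq_iff_eq_add'] using this
  have hterm (j : κ) : (g j * kernelMap Q r c (Pi.single j 1) l).natDegree ≤
      (Q.submatrix r c).det.natDegree + E := by
    by_cases hj : j ∈ Set.range c
    · obtain ⟨a, rfl⟩ := hj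
      simp [kernelMap_single]
    · exact natDegree_mul_le_of_le (hout j hj) (hQ j l)
  have hle : ((Q.submatrix r c).det * g l).natDegree ≤ (Q.submatrix r c).det.natDegree + E := by
    rw [hsum]
    exact natDegree_add_le_of_degree_le ((hb l).trans (Nat.le_add_left _ _))
      (natDegree_sum_le_of_forall_le _ _ fun j _ => hterm j)
  rw [natDegree_mul hdet hgl] at hle
  exact Nat.le_of_add_le_add_left hle

/-- Dividing the entries of `g` by the minor and subtracting the corresponding combination of the
columns of `kernelMap` bounds the entries outside `c`, hence all of them. -/
lemma IsMaximalMinor.exists_natDegree_le [IsDomain R] {G : ℕ → AddSubgroup R[X]}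
    [IsDegreeFiltration G] (hG : ∀ t, ∀ p ∈ G t, p.natDegree ≤ t) {r : α → ι} {c : α → κ}
    (h : IsMaximalMinor Q r c) (hdet : IsUnit (Q.submatrix r c).det.leadingCoeff) {d : ℕ}
    (hQ : ∀ i j, Q i j ∈ G d) {b : ι → R[X]} (hb : ∀ i, b i ∈ G d) {g : κ → R[X]}
    (hg : Q *ᵥ g = b) :
    ∃ g' : κ → R[X], Q *ᵥ g' = b ∧ (∀ j, (g' j).natDegree ≤ Fintype.card α * d) ∧
      g - g' ∈ Submodule.span R[X] (boundedKernel G (Fintype.card α * d) Q) := by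
  classical
  choose q hq using fun j => exists_natDegree_sub_mul_le hdet (g j)
  have hsol : Q *ᵥ (g - kernelMap Q r c q) = b := by
    rw [mulVec_sub, h.mulVec_kernelMap, sub_zero, hg]
  refine ⟨g - kernelMap Q r c q, hsol, natDegree_le_of_kernelMap hsol h.det_ne_zero
    (fun l => hG _ _ (cramerMap_mem hQ hb l)) (fun j l => hG _ _ (kernelMap_single_mem hQ j l))
    fun j hj => ?_, ?_⟩
  · rw [Pi.sub_apply, kernelMap_apply_of_notMem hj, mul_comm]
    exact hq j
  · rw [sub_sub_cancel, kernelMap_eq_sum]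
    exact sum_mem fun j _ => Submodule.smul_mem _ _ <| Submodule.subset_span
      ⟨h.mulVec_kernelMap _, kernelMap_single_mem hQ j⟩

end Reduction

section CoeffSystem

open Matrix Polynomial

variable {R ι κ : Type*} [CommRing R]

/-- The matrix over `R` of the system obtained from a linear system over `R[X]` by comparing the
coefficients of the powers of `X` below `L`, for unknowns of degree at most `E`. -/
def coeffMatrix (Q : Matrix ι κ R[X]) (E L : ℕ) : Matrix (ι × Fin L) (κ × Fin (E + 1)) R :=
  .of fun x y => if (y.2 : ℕ) ≤ x.2 then (Q x.1 y.1).coeff (x.2 - y.2) else 0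

/-- The vector of polynomials of degree at most `E` with the given coefficients. -/
noncomputable def ofCoeffs (κ R : Type*) [CommRing R] (E : ℕ) :
    (κ × Fin (E + 1) → R) →ₗ[R] (κ → R[X]) :=
  .pi fun j => ∑ l : Fin (E + 1), monomial (l : ℕ) ∘ₗ LinearMap.proj (j, l)

variable {E d : ℕ}

lemma ofCoeffs_apply (z : κ × Fin (E + 1) → R) (j : κ) :
    ofCoeffs κ R E z j = ∑ l : Fin (E + 1), monomial (l : ℕ) (z (j, l)) := by
  simp [ofCoeffs]

lemma natDegree_ofCoeffs_le (z : κ × Fin (E + 1) → R) (j : κ) :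
    (ofCoeffs κ R E z j).natDegree ≤ E := by
  rw [ofCoeffs_apply]
  exact natDegree_sum_le_of_forall_le _ _ fun l _ =>
    (natDegree_monomial_le _).trans (Nat.lt_succ_iff.mp l.2)

lemma ofCoeffs_coeff {g : κ → R[X]} (hg : ∀ j, (g j).natDegree ≤ E) :
    ofCoeffs κ R E (fun y => (g y.1).coeff y.2) = g := by
  funext j
  rw [ofCoeffs_apply, Fin.sum_univ_eq_sum_range (fun l => monomial l ((g j).coeff l))]
  exact (as_sum_range' (g j) (E + 1) (Nat.lt_succ_of_le (hg j))).symm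

lemma ofCoeffs_mem {F : ℕ → AddSubgroup R} [IsDegreeFiltration F] {β : ℕ}
    {z : κ × Fin (E + 1) → R} (hz : ∀ y, z y ∈ F β) (j : κ) :
    ofCoeffs κ R E z j ∈ polynomialFiltration F (β + E) := by
  rw [ofCoeffs_apply]
  exact sum_mem fun l _ => IsDegreeFiltration.mem_of_le _
    (Nat.add_le_add_left (Nat.lt_succ_iff.mp l.2) β)
    (monomial_mem_polynomialFiltration (hz (j, l)) l)

variable [Fintype κ]

lemma coeff_mulVec_ofCoeffs (Q : Matrix ι κ R[X]) {L : ℕ} (z : κ × Fin (E + 1) → R) (i : ι)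
    (l : Fin L) :
    ((Q *ᵥ ofCoeffs κ R E z) i).coeff l = (coeffMatrix Q E L *ᵥ z) (i, l) := by
  simp only [mulVec, dotProduct, ofCoeffs_apply, finsetSum_coeff, Finset.mul_sum,
    Fintype.sum_prod_type, coeffMatrix, of_apply]
  refine Finset.sum_congr rfl fun j _ => Finset.sum_congr rfl fun x _ => ?_
  rw [← C_mul_X_pow_eq_monomial, mul_left_comm, coeff_C_mul, coeff_mul_X_pow']
  split_ifs
  exacts [mul_comm _ _, by simp]

lemma natDegree_mulVec_le {Q : Matrix ι κ R[X]} (hQ : ∀ i j, (Q i j).natDegree ≤ d)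
    {g : κ → R[X]} (hg : ∀ j, (g j).natDegree ≤ E) (i : ι) :
    ((Q *ᵥ g) i).natDegree ≤ d + E :=
  natDegree_sum_le_of_forall_le _ _ fun j _ => natDegree_mul_le_of_le (hQ i j) (hg j)

lemma mulVec_ofCoeffs_eq {Q : Matrix ι κ R[X]} (hQ : ∀ i j, (Q i j).natDegree ≤ d) {b : ι → R[X]}
    (hb : ∀ i, (b i).natDegree ≤ d + E) {z : κ × Fin (E + 1) → R}
    (hz : coeffMatrix Q E (d + E + 1) *ᵥ z = fun x => (b x.1).coeff x.2) :
    Q *ᵥ ofCoeffs κ R E z = b := by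
  ext i l
  by_cases hl : l < d + E + 1
  · exact (coeff_mulVec_ofCoeffs Q z i ⟨l, hl⟩).trans (congrFun hz _)
  · rw [not_lt] at hl
    rw [coeff_eq_zero_of_natDegree_lt ((hb i).trans_lt hl), coeff_eq_zero_of_natDegree_lt
      ((natDegree_mulVec_le hQ (natDegree_ofCoeffs_le z) i).trans_lt hl)]

lemma HasBoundedSolution.of_coeffMatrix {F : ℕ → AddSubgroup R} [IsDegreeFiltration F]
    {Q : Matrix ι κ R[X]} {β : ℕ} (hQ : ∀ i j, (Q i j).natDegree ≤ d) {b : ι → R[X]}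
    (hb : ∀ i, (b i).natDegree ≤ d + E) {g : κ → R[X]} (hg : ∀ j, (g j).natDegree ≤ E)
    (h : HasBoundedSolution F β (coeffMatrix Q E (d + E + 1)) (fun x => (b x.1).coeff x.2)
      (fun y => (g y.1).coeff y.2)) :
    HasBoundedSolution (polynomialFiltration F) (β + E) Q b g := by
  obtain ⟨g₀, hg₀, hdeg, hspan⟩ := h
  refine ⟨ofCoeffs κ R E g₀, mulVec_ofCoeffs_eq hQ hb hg₀, ofCoeffs_mem hdeg, ?_⟩
  have hle : Submodule.span R (boundedKernel F β (coeffMatrix Q E (d + E + 1))) ≤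
      ((Submodule.span R[X] (boundedKernel (polynomialFiltration F) (β + E) Q)).restrictScalars
        R).comap (ofCoeffs κ R E) :=
    Submodule.span_le.2 fun z hz => Submodule.subset_span
      ⟨mulVec_ofCoeffs_eq hQ (by simp) (hz.1.trans (by ext; simp)), ofCoeffs_mem hz.2⟩
  have := hle hspan
  rwa [Submodule.mem_comap, map_sub, ofCoeffs_coeff hg] at this

end CoeffSystem

section Hermann

open Matrix Polynomial

lemma IsMaximalMinor.map_ringEquiv {A B ι κ α : Type*} [CommRing A] [CommRing B] [Fintype κ]
    [Fintype α] [DecidableEq α] {Q : Matrix ι κ A} {r : α → ι} {c : α → κ}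
    (h : IsMaximalMinor Q r c) (e : A ≃+* B) : IsMaximalMinor (Q.map e) r c where
  det_ne_zero := by
    rw [submatrix_map, ← RingEquiv.mapMatrix_apply, ← RingEquiv.map_det]
    exact (map_ne_zero_iff e e.injective).2 h.det_ne_zero
  mulVec_eq_zero z hz := by
    have hmap (i : ι) : (Q.map e *ᵥ z) i = e ((Q *ᵥ (e.symm ∘ z)) i) := by
      simp [mulVec, dotProduct]
    have hker : Q *ᵥ (e.symm ∘ z) = 0 := h.mulVec_eq_zero _ fun a => by
      rw [← map_eq_zero_iff e e.injective, ← hmap, hz]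
    funext i
    rw [hmap, hker, Pi.zero_apply, map_zero, Pi.zero_apply]

lemma IsMaximalMinor.hasBoundedSolution {R ι κ α : Type*} [CommRing R] [IsDomain R]
    [Fintype κ] [Fintype α] [DecidableEq α] {F : ℕ → AddSubgroup R} [IsDegreeFiltration F]
    {Q : Matrix ι κ R[X]} {r : α → ι} {c : α → κ} (h : IsMaximalMinor Q r c)
    (hdet : IsUnit (Q.submatrix r c).det.leadingCoeff) {d E β : ℕ} (hE : Fintype.card α * d ≤ E)
    (hEβ : E ≤ β) {b : ι → R[X]} {g : κ → R[X]} (hQ : ∀ i j, Q i j ∈ polynomialFiltration F d)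
    (hb : ∀ i, b i ∈ polynomialFiltration F d) (hg : Q *ᵥ g = b)
    (ih : ∀ (Q' : Matrix (ι × Fin (d + E + 1)) (κ × Fin (E + 1)) R) (b' : ι × Fin (d + E + 1) → R)
      (g' : κ × Fin (E + 1) → R), (∀ x y, Q' x y ∈ F d) → (∀ x, b' x ∈ F d) → Q' *ᵥ g' = b' →
        HasBoundedSolution F (β - E) Q' b' g') :
    HasBoundedSolution (polynomialFiltration F) β Q b g := by
  have hcoeff {p : R[X]} (hp : p ∈ polynomialFiltration F d) (i : ℕ) : p.coeff i ∈ F d :=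
    IsDegreeFiltration.mem_of_le F (Nat.sub_le d i) (hp.2 i)
  obtain ⟨g', hg', hdeg, hspan⟩ := h.exists_natDegree_le
    (fun _ _ hp => (mem_polynomialFiltration.1 hp).1) hdet hQ hb hg
  have hdegE (j : κ) : (g' j).natDegree ≤ E := (hdeg j).trans hE
  have hred : HasBoundedSolution (polynomialFiltration F) (β - E + E) Q b g' := by
    refine .of_coeffMatrix (d := d) (fun i j => (hQ i j).1)
      (fun i => (hb i).1.trans (Nat.le_add_right _ _)) hdegE (ih _ _ _ (fun x y => ?_)
      (fun x => hcoeff (hb _) _) ?_)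
    · rw [coeffMatrix, of_apply]
      split_ifs
      exacts [hcoeff (hQ _ _) _, zero_mem _]
    · funext x
      rw [← coeff_mulVec_ofCoeffs, ofCoeffs_coeff hdegE, hg']
  rw [Nat.sub_add_cancel hEβ] at hred
  exact hred.of_sub_mem (Submodule.span_mono (boundedKernel_mono Q (hE.trans hEβ)) hspan)

/-- The degree bound in Hermann's theorem for `m` equations of degree at most `d` in `n` variables.
The term `m * d` makes the induction on `n` go through; the subtraction never truncates, since
`m * d ≤ (3 * m * d) ^ 2 ^ n`. -/
def hermannBound (n m d : ℕ) : ℕ := (3 * m * d) ^ 2 ^ n - m * d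

lemma hermannBound_le (n m d : ℕ) : hermannBound n m d ≤ (3 * m * d) ^ 2 ^ n :=
  Nat.sub_le _ _

lemma hermannBound_add_le {n m d : ℕ} (hm : 1 ≤ m) (hd : 1 ≤ d) :
    hermannBound n (3 * m ^ 2 * d) d + m * d ≤ hermannBound (n + 1) m d := by
  have hpow : (3 * (3 * m ^ 2 * d) * d) ^ 2 ^ n = (3 * m * d) ^ 2 ^ (n + 1) := by
    rw [pow_succ' 2 n, pow_mul]
    ring
  have hle : 3 * m ^ 2 * d * d ≤ (3 * m * d) ^ 2 ^ (n + 1) :=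
    calc 3 * m ^ 2 * d * d ≤ (3 * m * d) ^ 2 := by nlinarith [sq_nonneg (m * d)]
      _ ≤ (3 * m * d) ^ 2 ^ (n + 1) :=
        Nat.pow_le_pow_right (by positivity) (le_self_pow₀ one_le_two n.succ_ne_zero)
  have hmd : 2 * (m * d) ≤ 3 * m ^ 2 * d * d := by
    have : 1 ≤ m * d := Nat.mul_pos hm hd
    nlinarith
  unfold hermannBound
  omega

lemma card_prod_fin_le {ι : Type*} [Fintype ι] {m d : ℕ} (hm : 1 ≤ m) (hd : 1 ≤ d)
    (hι : Fintype.card ι ≤ m) : Fintype.card (ι × Fin (d + m * d + 1)) ≤ 3 * m ^ 2 * d := by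
  have hmd : 1 ≤ m * d := Nat.mul_pos hm hd
  calc Fintype.card (ι × Fin (d + m * d + 1)) ≤ m * (d + m * d + 1) := by
        rw [Fintype.card_prod, Fintype.card_fin]
        exact Nat.mul_le_mul_right _ hι
    _ ≤ m * (m * d + m * d + m * d) := Nat.mul_le_mul_left m (by nlinarith)
    _ = 3 * m ^ 2 * d := by ring

variable {k : Type*} [Field k] [Infinite k] {n : ℕ}

/-- **Hermann's theorem**. In the induction step a maximal minor is made monic in the first
variable; comparing coefficients then leaves at most `m * (d + m * d + 1) ≤ 3 * m ^ 2 * d` equations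
in one variable less. -/
theorem hasBoundedSolution_hermannBound {ι κ : Type*} [Fintype ι] [Fintype κ] {m d : ℕ}
    (hm : 1 ≤ m) (hd : 1 ≤ d) (hι : Fintype.card ι ≤ m) {Q : Matrix ι κ (MvPolynomial (Fin n) k)}
    {b : ι → MvPolynomial (Fin n) k} {g : κ → MvPolynomial (Fin n) k}
    (hQ : ∀ i j, (Q i j).totalDegree ≤ d) (hb : ∀ i, (b i).totalDegree ≤ d) (hg : Q *ᵥ g = b) :
    HasBoundedSolution (totalDegreeFiltration (Fin n) k) (hermannBound n m d) Q b g := by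
  classical
  induction n generalizing ι κ m with
  | zero =>
    refine ⟨g, hg, fun j => mem_totalDegreeFiltration.2 ?_, by simp⟩
    rw [MvPolynomial.eq_C_of_isEmpty (g j), MvPolynomial.totalDegree_C]
    exact Nat.zero_le _
  | succ n ih =>
    obtain ⟨N, r, c, h⟩ := exists_isMaximalMinor Q
    obtain ⟨a, ha⟩ := exists_isUnit_leadingCoeff_shear h.det_ne_zero
    let e : MvPolynomial (Fin (n + 1)) k ≃+* (MvPolynomial (Fin n) k)[X] :=
      ((shear a).trans (MvPolynomial.finSuccEquiv k n)).toRingEquiv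
    have he {p : MvPolynomial (Fin (n + 1)) k} (hp : p.totalDegree ≤ d) :
        e p ∈ polynomialFiltration (totalDegreeFiltration (Fin n) k) d := by
      have hep : e p = MvPolynomial.finSuccEquiv k n (shear a p) := rfl
      rw [hep, finSuccEquiv_mem_polynomialFiltration_iff]
      exact (totalDegree_shear_le a p).trans hp
    have hdet : IsUnit ((Q.map e).submatrix r c).det.leadingCoeff := by
      rw [submatrix_map, ← RingEquiv.mapMatrix_apply, ← RingEquiv.map_det]
      exact ha
    have hsol : Q.map e *ᵥ (e ∘ g) = e ∘ b := by
      ext1 i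
      simp [← hg, mulVec, dotProduct]
    have hbound := hermannBound_add_le (n := n) hm hd
    have hred : HasBoundedSolution (polynomialFiltration (totalDegreeFiltration (Fin n) k))
        (hermannBound (n + 1) m d) (Q.map e) (e ∘ b) (e ∘ g) := by
      refine (h.map_ringEquiv e).hasBoundedSolution hdet
        (Nat.mul_le_mul_right d (h.card_le.trans hι)) (le_of_add_le_right hbound)
        (fun i j => he (hQ i j)) (fun i => he (hb i)) hsol fun Q' b' g' hQ' hb' hg' => ?_
      have hm' : 1 ≤ 3 * m ^ 2 * d := Nat.mul_pos (by positivity) hd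
      simp only [mem_totalDegreeFiltration] at hQ' hb'
      exact (ih hm' (card_prod_fin_le hm hd hι) hQ' hb' hg').mono (Nat.le_sub_of_add_le hbound)
    refine hred.of_ringEquiv e fun q hq => mem_totalDegreeFiltration.2 ?_
    exact (totalDegree_shear_symm_le a _).trans <|
      finSuccEquiv_mem_polynomialFiltration_iff.1 (by simpa using hq)

lemma exists_totalDegree_le_sum_mul_eq {ι : Type*} [Fintype ι] {d : ℕ} (hd : 1 ≤ d)
    {f : ι → MvPolynomial (Fin n) k} (hf : ∀ i, (f i).totalDegree ≤ d) {b : MvPolynomial (Fin n) k}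
    (hb : b.totalDegree ≤ d) (hmem : b ∈ Ideal.span (Set.range f)) :
    ∃ g : ι → MvPolynomial (Fin n) k, (∀ i, (g i).totalDegree ≤ (3 * d) ^ 2 ^ n) ∧
      ∑ i, g i * f i = b := by
  have hmul (g : ι → MvPolynomial (Fin n) k) (u : Unit) :
      (replicateRow Unit f *ᵥ g) u = ∑ i, g i * f i :=
    Finset.sum_congr rfl fun _ _ => mul_comm _ _
  obtain ⟨g, hg⟩ := Ideal.mem_span_range_iff_exists_fun.mp hmem
  obtain ⟨g₀, hg₀, hdeg, -⟩ := hasBoundedSolution_hermannBound le_rfl hd (by simp)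
    (Q := replicateRow Unit f) (b := fun _ => b) (g := g) (fun _ => hf) (fun _ => hb)
    (funext fun u => (hmul g u).trans hg)
  refine ⟨g₀, fun i => ?_, (hmul g₀ ()).symm.trans (congrFun hg₀ ())⟩
  simpa using (mem_totalDegreeFiltration.1 (hdeg i)).trans (hermannBound_le n 1 d)

/-- The ideal `I` of a polynomial ring is prime up to `b`: primality is tested on factors of total
degree at most `b`. It does not ask for `I` to be proper. -/
def IsPrimeUpTo {σ R : Type*} [CommSemiring R] (I : Ideal (MvPolynomial σ R)) (b : ℕ) : Prop :=
  ∀ f g, f.totalDegree ≤ b → g.totalDegree ≤ b → f * g ∈ I → f ∈ I ∨ g ∈ I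

/-- The syzygies of `u` and the generators are generated by syzygies of bounded degree, to which
`IsPrimeUpTo` applies. -/
lemma IsPrimeUpTo.mem_of_mul_mem {ι : Type*} [Finite ι] {f : ι → MvPolynomial (Fin n) k} {d b : ℕ}
    (h : IsPrimeUpTo (Ideal.span (Set.range f)) b) (hd : 1 ≤ d) (hf : ∀ i, (f i).totalDegree ≤ d)
    (hb : (3 * d) ^ 2 ^ n ≤ b) {u v : MvPolynomial (Fin n) k} (hu : u.totalDegree ≤ d)
    (huI : u ∉ Ideal.span (Set.range f)) (huv : u * v ∈ Ideal.span (Set.range f)) :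
    v ∈ Ideal.span (Set.range f) := by
  have := Fintype.ofFinite ι
  set I := Ideal.span (Set.range f)
  have hdb : d ≤ b :=
    calc d ≤ 3 * d := by omega
      _ ≤ (3 * d) ^ 2 ^ n := le_self_pow₀ (by omega) (by positivity)
      _ ≤ b := hb
  have hle : hermannBound n 1 d ≤ b := by simpa using (hermannBound_le n 1 d).trans hb
  let Q : Matrix Unit (Option ι) (MvPolynomial (Fin n) k) :=
    replicateRow Unit fun j => j.elim u f
  have hQ (z : Option ι → MvPolynomial (Fin n) k) (i : Unit) :
      (Q *ᵥ z) i = u * z none + ∑ i, f i * z (some i) := by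
    simp [Q, mulVec, dotProduct, Fintype.sum_option]
  have hker (z) (hz : z ∈ boundedKernel (totalDegreeFiltration (Fin n) k) (hermannBound n 1 d) Q) :
      z none ∈ I := by
    have hsum : ∑ i, f i * z (some i) ∈ I := sum_mem fun i _ =>
      I.mul_mem_right _ (Ideal.subset_span ⟨i, rfl⟩)
    have hmul : u * z none ∈ I := by
      rw [← Ideal.add_mem_iff_left I hsum, ← hQ z (), hz.1]
      exact I.zero_mem
    exact (h _ _ (hu.trans hdb) ((mem_totalDegreeFiltration.1 (hz.2 none)).trans hle)
      hmul).resolve_left huI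
  obtain ⟨g, hg⟩ := Ideal.mem_span_range_iff_exists_fun.mp huv
  obtain ⟨g₀, hg₀, hdeg, hspan⟩ := hasBoundedSolution_hermannBound le_rfl hd (by simp)
    (Q := Q) (b := 0) (g := fun j => j.elim v (-g))
    (by rintro - (- | j); exacts [hu, hf j]) (by simp)
    (funext fun i => by simp [hQ, ← hg, mul_comm])
  have hspan_le : Submodule.span (MvPolynomial (Fin n) k)
      (boundedKernel (totalDegreeFiltration (Fin n) k) (hermannBound n 1 d) Q) ≤
      Submodule.comap (LinearMap.proj none) I :=
    Submodule.span_le.2 hker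
  simpa using add_mem (hspan_le hspan) (hker g₀ ⟨hg₀, hdeg⟩)

end Hermann

section BoundedRelation

open Matrix MvPolynomial

attribute [local instance] MvPolynomial.algebraMvPolynomial

lemma totalDegree_map_of_injective {σ A B : Type*} [CommSemiring A] [CommSemiring B] {φ : A →+* B}
    (hφ : Function.Injective φ) (p : MvPolynomial σ A) : (map φ p).totalDegree = p.totalDegree := by
  rw [totalDegree, support_map_of_injective _ hφ, totalDegree]

variable {A σ : Type*} [CommRing A]

/-- Hermann's theorem over the fraction field, with cleared denominators. -/
lemma exists_smul_eq_sum_mul [IsDomain A] [Infinite A] {ι : Type*} [Fintype ι] {m e : ℕ}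
    (he : 1 ≤ e) {f : ι → MvPolynomial (Fin m) A} (hf : ∀ i, (f i).totalDegree ≤ e)
    {u : MvPolynomial (Fin m) A} (hu : u.totalDegree ≤ e) (hmem : u ∈ Ideal.span (Set.range f)) :
    ∃ (s : A) (g : ι → MvPolynomial (Fin m) A), s ≠ 0 ∧
      (∀ i, (g i).totalDegree ≤ (3 * e) ^ 2 ^ m) ∧ s • u = ∑ i, g i * f i := by
  let K := FractionRing A
  have hinj : Function.Injective (algebraMap A K) := IsFractionRing.injective A K
  have : Infinite K := Infinite.of_injective _ hinj
  let φ : MvPolynomial (Fin m) A →+* MvPolynomial (Fin m) K := map (algebraMap A K)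
  have hφdeg (p : MvPolynomial (Fin m) A) : (φ p).totalDegree = p.totalDegree :=
    totalDegree_map_of_injective hinj p
  have hφmem : φ u ∈ Ideal.span (Set.range (φ ∘ f)) := by
    simpa only [Ideal.map_span, ← Set.range_comp] using Ideal.mem_map_of_mem φ hmem
  obtain ⟨G, hG, hGu⟩ := exists_totalDegree_le_sum_mul_eq he (f := φ ∘ f)
    (fun i => (hφdeg _).trans_le (hf i)) ((hφdeg u).trans_le hu) hφmem
  obtain ⟨⟨_, s, hs, rfl⟩, hmultiple⟩ := IsLocalization.exist_integer_multiples_of_finite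
    ((nonZeroDivisors A).map (C (σ := Fin m))) G
  choose g hg using hmultiple
  replace hg (i : ι) : φ (g i) = C (algebraMap A K s) * G i := by
    rw [← map_C, ← algebraMap_def, ← Algebra.smul_def]
    exact hg i
  refine ⟨s, g, nonZeroDivisors.ne_zero hs, fun i => ?_, map_injective _ hinj ?_⟩
  · rw [← hφdeg, hg, ← smul_eq_C_mul]
    exact (totalDegree_smul_le _ _).trans (hG i)
  · change φ (s • u) = φ (∑ i, g i * f i)
    simp only [smul_eq_C_mul, map_mul, map_sum, hg, mul_assoc, ← Finset.mul_sum]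
    rw [← hGu]
    simp [φ]

/-- The exponent of a monomial given by a point of the box `{0, …, N - 1} ^ σ`. -/
noncomputable def boxExp [Finite σ] {N : ℕ} (x : σ → Fin N) : σ →₀ ℕ :=
  Finsupp.equivFunOnFinite.symm fun i => x i

lemma degree_boxExp_le [Fintype σ] {N : ℕ} (x : σ → Fin N) :
    (boxExp x).degree ≤ Fintype.card σ * N := by
  rw [Finsupp.degree_eq_sum, ← smul_eq_mul, ← Finset.card_univ]
  exact Finset.sum_le_card_nsmul _ _ _ fun i _ => (x i).2.le

lemma exists_boxExp_eq [Finite σ] {N : ℕ} {γ : σ →₀ ℕ} (h : ∀ i, γ i ≤ N) :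
    ∃ x : σ → Fin (N + 1), boxExp x = γ :=
  ⟨fun i => ⟨γ i, Nat.lt_succ_of_le (h i)⟩, by ext i; simp [boxExp]⟩

lemma eq_of_forall_coeff_boxExp_eq [Finite σ] {N : ℕ} {p q : MvPolynomial σ A}
    (hp : p.totalDegree ≤ N) (hq : q.totalDegree ≤ N)
    (h : ∀ x : σ → Fin (N + 1), p.coeff (boxExp x) = q.coeff (boxExp x)) : p = q := by
  ext γ
  by_cases hγ : ∀ i, γ i ≤ N
  · obtain ⟨x, rfl⟩ := exists_boxExp_eq hγ
    exact h x
  · push Not at hγ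
    obtain ⟨i, hi⟩ := hγ
    have hlt : N < γ.degree := hi.trans_le (Finsupp.le_degree i γ)
    rw [coeff_eq_zero_of_totalDegree_lt (hp.trans_lt hlt),
      coeff_eq_zero_of_totalDegree_lt (hq.trans_lt hlt)]

variable [IsDomain A] (F : ℕ → AddSubgroup A) [IsDegreeFiltration F]

lemma exists_smul_eq_sum_smul_of_mem [Fintype σ] {τ : Type*} [Fintype τ] {N d : ℕ}
    {v : τ → MvPolynomial σ A} {w : MvPolynomial σ A} (hv : ∀ j, (v j).totalDegree ≤ N)
    (hvF : ∀ j, v j ∈ coeffFiltration σ F d) (hw : w.totalDegree ≤ N)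
    (hwF : w ∈ coeffFiltration σ F d) {c : A} (hc : c ≠ 0) {a : τ → A}
    (h : ∑ j, a j • v j = c • w) :
    ∃ (c' : A) (a' : τ → A), c' ≠ 0 ∧ c' ∈ F ((N + 1) ^ Fintype.card σ * d) ∧
      (∀ j, a' j ∈ F ((N + 1) ^ Fintype.card σ * d)) ∧ ∑ j, a' j • v j = c' • w := by
  classical
  let Q : Matrix (σ → Fin (N + 1)) τ A := .of fun x j => (v j).coeff (boxExp x)
  have hQ (y : τ → A) (x : σ → Fin (N + 1)) :
      (Q *ᵥ y) x = (∑ j, y j • v j).coeff (boxExp x) := by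
    simp [Q, mulVec, dotProduct, coeff_sum, mul_comm]
  obtain ⟨c', a', hc', hc'F, ha'F, hca⟩ := exists_mulVec_eq_smul_of_mem F (Q := Q)
    (b := fun x => w.coeff (boxExp x)) (fun x j => mem_coeffFiltration.1 (hvF j) _)
    (fun x => mem_coeffFiltration.1 hwF _) hc (funext fun x => by rw [hQ, h]; rfl)
  have hcard : Fintype.card (σ → Fin (N + 1)) = (N + 1) ^ Fintype.card σ := by simp
  rw [hcard] at hc'F ha'F
  refine ⟨c', a', hc', hc'F, ha'F, eq_of_forall_coeff_boxExp_eq (N := N) ?_ ?_ fun x => ?_⟩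
  · exact totalDegree_finsetSum_le fun j _ => (totalDegree_smul_le _ _).trans (hv j)
  · exact (totalDegree_smul_le _ _).trans hw
  · rw [← hQ, hca]
    rfl

/-- Bound for the degrees of the coefficients of a linear relation modulo an ideal of
`A[y₁, …, y_m]`, where all the polynomials involved have total degree at most `e` and coefficients
of degree at most `d`. -/
def relationBound (m e d : ℕ) : ℕ :=
  ((3 * e) ^ 2 ^ m + e + 1) ^ m * d

lemma exists_smul_sub_sum_smul_mem_of_mem [Infinite A] {ι κ : Type*} [Finite ι] [Fintype κ]
    {m d e : ℕ} (he : 1 ≤ e) {f : ι → MvPolynomial (Fin m) A} (hf : ∀ i, (f i).totalDegree ≤ e)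
    (hfF : ∀ i, f i ∈ coeffFiltration (Fin m) F d) {w : MvPolynomial (Fin m) A}
    (hw : w.totalDegree ≤ e) (hwF : w ∈ coeffFiltration (Fin m) F d)
    {v : κ → MvPolynomial (Fin m) A} (hv : ∀ k, (v k).totalDegree ≤ e)
    (hvF : ∀ k, v k ∈ coeffFiltration (Fin m) F d) {c : A} (hc : c ≠ 0) {b : κ → A}
    (hrel : c • w - ∑ k, b k • v k ∈ Ideal.span (Set.range f)) :
    ∃ (c' : A) (b' : κ → A), c' ≠ 0 ∧ c' ∈ F (relationBound m e d) ∧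
      (∀ k, b' k ∈ F (relationBound m e d)) ∧
      c' • w - ∑ k, b' k • v k ∈ Ideal.span (Set.range f) := by
  classical
  have := Fintype.ofFinite ι
  have hsmul {p : MvPolynomial (Fin m) A} (a : A) (hp : p.totalDegree ≤ e) :
      (a • p).totalDegree ≤ e :=
    (totalDegree_smul_le _ _).trans hp
  obtain ⟨s, g, hs, hg, hsg⟩ := exists_smul_eq_sum_mul he hf
    ((totalDegree_sub _ _).trans <| max_le (hsmul c hw) <|
      totalDegree_finsetSum_le fun k _ => hsmul (b k) (hv k)) hrel
  let V : κ ⊕ (Σ i, (g i).support) → MvPolynomial (Fin m) A :=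
    Sum.elim v fun x => monomial x.2.1 1 * f x.1
  have hg_sum (i : ι) : g i * f i = ∑ μ : (g i).support, (g i).coeff μ • V (.inr ⟨i, μ⟩) := by
    conv_lhs => rw [as_sum (g i), ← Finset.sum_coe_sort, Finset.sum_mul]
    exact Finset.sum_congr rfl fun μ _ => by simp [V, ← smul_mul_assoc, smul_monomial]
  have hV : ∀ j, (V j).totalDegree ≤ (3 * e) ^ 2 ^ m + e := by
    rintro (k | ⟨i, μ⟩)
    · exact (hv k).trans (Nat.le_add_left _ _)
    · refine (totalDegree_mul _ _).trans (add_le_add ?_ (hf i))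
      exact (totalDegree_monomial_le _ _).trans ((le_totalDegree μ.2).trans (hg i))
  have hVF : ∀ j, V j ∈ coeffFiltration (Fin m) F d := by
    rintro (k | ⟨i, μ⟩)
    · exact hvF k
    · refine mem_coeffFiltration.2 fun γ => ?_
      simp only [V, Sum.elim_inr, coeff_monomial_mul', one_mul]
      split_ifs
      exacts [mem_coeffFiltration.1 (hfF i) _, zero_mem _]
  obtain ⟨c', a, hc', hc'F, haF, hca⟩ := exists_smul_eq_sum_smul_of_mem F hV hVF
    (hw.trans (Nat.le_add_left _ _)) hwF (mul_ne_zero hs hc)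
    (a := Sum.elim (fun k => s * b k) fun x => (g x.1).coeff x.2) (by
      have hsw : (s * c) • w = ∑ k, (s * b k) • v k + ∑ i, g i * f i := by
        simp only [← hsg, smul_sub, Finset.smul_sum, smul_smul, add_sub_cancel]
      rw [hsw, Fintype.sum_sum_type, Fintype.sum_sigma]
      simp only [hg_sum, V, Sum.elim_inl, Sum.elim_inr])
  rw [Fintype.card_fin] at hc'F haF
  refine ⟨c', a ∘ .inl, hc', hc'F, fun k => haF _, ?_⟩
  rw [← hca, Fintype.sum_sum_type]
  simp only [V, Sum.elim_inl, Sum.elim_inr, Function.comp_apply, add_sub_cancel_left]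
  exact sum_mem fun x _ => Submodule.smul_of_tower_mem _ _
    (Ideal.mul_mem_left _ _ (Ideal.subset_span ⟨x.1, rfl⟩))

end BoundedRelation

section Siegel

open MvPolynomial

lemma choose_mul_succ_eq_add (r u : ℕ) :
    (u + 1 + r) * (r + (u + 1)).choose r =
      (u + 1 + r) * (r + u).choose r + r * (r + (u + 1)).choose r := by
  have h := Nat.choose_mul_succ_eq (r + u) r
  rw [add_assoc, Nat.add_sub_cancel_left] at h
  linarith

lemma mul_choose_add_le (r t δ : ℕ) :
    (t + 1 + r) * (r + (t + δ)).choose r ≤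
      (t + 1 + r) * (r + t).choose r + δ * r * (r + (t + δ)).choose r := by
  induction δ with
  | zero => simp
  | succ δ ih =>
    rw [← add_assoc t]
    have hstep := choose_mul_succ_eq_add r (t + δ)
    have hmono : (r + (t + δ)).choose r ≤ (r + (t + δ + 1)).choose r :=
      Nat.choose_le_choose r (by omega)
    have hstep_le : (t + 1 + r) * (r + (t + δ + 1)).choose r ≤
        (t + 1 + r) * (r + (t + δ)).choose r + r * (r + (t + δ + 1)).choose r := by
      nlinarith
    nlinarith [Nat.mul_le_mul_left (δ * r) hmono]

lemma mul_choose_add_lt {r t δ D D' : ℕ} (hD : D' < D) (ht : D * δ * r < t + 1 + r) :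
    D' * (r + (t + δ)).choose r < D * (r + t).choose r := by
  have hpos : 0 < (r + (t + δ)).choose r := Nat.choose_pos (by omega)
  refine Nat.lt_of_mul_lt_mul_left (a := t + 1 + r) ?_
  have hgrowth := Nat.mul_le_mul_left D (mul_choose_add_le r t δ)
  have hsucc : (D' + 1) * ((t + 1 + r) * (r + (t + δ)).choose r) ≤
      D * ((t + 1 + r) * (r + (t + δ)).choose r) := Nat.mul_le_mul_right _ hD
  have hlt := Nat.mul_lt_mul_of_pos_right ht hpos
  nlinarith

variable {σ : Type*} [Fintype σ]

lemma card_finsupp_degree_le (t : ℕ) :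
    Nat.card {γ : σ →₀ ℕ // γ.degree ≤ t} = (Fintype.card σ + t).choose (Fintype.card σ) := by
  classical
  let S : Finset (σ →₀ ℕ) := (Finset.range (t + 1)).biUnion (Finset.finsuppAntidiag Finset.univ)
  have hS (γ : σ →₀ ℕ) : γ ∈ S ↔ γ.degree ≤ t := by
    simp [S, Finset.mem_finsuppAntidiag, Finsupp.degree_eq_sum]
  rw [Nat.subtype_card S hS, Finset.card_biUnion]
  · simp only [Finset.card_finsuppAntidiag_nat_eq_multichoose, Finset.card_univ]
    rw [Nat.sum_range_multichoose, add_comm]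
  · refine fun i _ j _ hij => Finset.disjoint_left.2 fun γ hi hj => hij ?_
    rw [Finset.mem_finsuppAntidiag] at hi hj
    exact hi.1.symm.trans hj.1

variable {k : Type*} [Field k]

lemma finrank_restrictTotalDegree (t : ℕ) :
    Module.finrank k (restrictTotalDegree σ k t) =
      (Fintype.card σ + t).choose (Fintype.card σ) :=
  (Module.finrank_eq_nat_card_basis (basisRestrictSupport k _)).trans (card_finsupp_degree_le t)

/-- Siegel's lemma for polynomials: there are more unknown coefficients than conditions. -/
lemma exists_ne_zero_forall_mem_pow_idealOfVars {ι κ : Type*} [Fintype ι] [Fintype κ] {t δ : ℕ}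
    (hcard : Fintype.card κ < Fintype.card ι)
    (ht : Fintype.card ι * δ * Fintype.card σ < t + 1 + Fintype.card σ)
    (T : κ → (ι → MvPolynomial σ k) →ₗ[k] MvPolynomial σ k) :
    ∃ α : ι → MvPolynomial σ k, α ≠ 0 ∧ (∀ i, (α i).totalDegree ≤ t) ∧
      ∀ l, T l α ∈ idealOfVars σ k ^ (t + δ + 1) := by
  let M := {γ : σ →₀ ℕ // γ.degree ≤ t + δ}
  have : Finite M := Nat.finite_of_card_ne_zero <| by
    rw [card_finsupp_degree_le]
    exact (Nat.choose_pos (Nat.le_add_right _ _)).ne'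
  have := Fintype.ofFinite M
  let conditions : (ι → restrictTotalDegree σ k t) →ₗ[k] (κ × M → k) :=
    LinearMap.pi fun x => lcoeff k x.2.1 ∘ₗ T x.1 ∘ₗ
      LinearMap.pi fun i => (restrictTotalDegree σ k t).subtype ∘ₗ LinearMap.proj i
  have hker : LinearMap.ker conditions ≠ ⊥ := by
    refine LinearMap.ker_ne_bot_of_finrank_lt ?_
    rw [Module.finrank_fintype_fun_eq_card, Module.finrank_pi_fintype, Fintype.card_prod,
      ← Nat.card_eq_fintype_card (α := M), card_finsupp_degree_le]
    simpa [finrank_restrictTotalDegree] using mul_choose_add_lt hcard ht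
  obtain ⟨α, hα, hα₀⟩ := Submodule.exists_mem_ne_zero_of_ne_bot hker
  refine ⟨fun i => α i, fun h => hα₀ (funext fun i => Subtype.ext (congrFun h i)),
    fun i => (mem_restrictTotalDegree σ t _).1 (α i).2, fun l => ?_⟩
  rw [mem_pow_idealOfVars_iff']
  exact fun γ hγ => congrFun (LinearMap.mem_ker.1 hα) (l, ⟨γ, Nat.lt_succ_iff.1 hγ⟩)

end Siegel

section Vanishing

open MvPolynomial

variable {R σ : Type*} [CommRing R]

/-- The automorphism of `R[x_i : i ∈ σ]` that moves the point `p` to the origin. -/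
noncomputable def translate (p : σ → R) : MvPolynomial σ R ≃ₐ[R] MvPolynomial σ R :=
  .ofAlgHom (aeval fun i => X i + C (p i)) (aeval fun i => X i - C (p i))
    (by ext; simp [algHom_C]) (by ext; simp [algHom_C])

lemma constantCoeff_translate (p : σ → R) (x : MvPolynomial σ R) :
    constantCoeff (translate p x) = eval p x := by
  have h : constantCoeff.comp (translate p : MvPolynomial σ R →+* MvPolynomial σ R) = eval p := by
    ext <;> simp [translate]
  exact DFunLike.congr_fun h x

lemma totalDegree_translate_le [Nontrivial R] (p : σ → R) (x : MvPolynomial σ R) :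
    (translate p x).totalDegree ≤ x.totalDegree :=
  totalDegree_aeval_le (fun i => (totalDegree_add _ _).trans (by simp)) x

lemma eq_zero_of_mem_pow_idealOfVars {x : MvPolynomial σ R} {N : ℕ} (hx : x.totalDegree < N)
    (h : x ∈ idealOfVars σ R ^ N) : x = 0 := by
  rw [mem_pow_idealOfVars_iff'] at h
  ext γ
  rcases lt_or_ge γ.degree N with hγ | hγ
  · exact h γ hγ
  · exact coeff_eq_zero_of_totalDegree_lt (hx.trans_le hγ)

variable {k : Type*} [Field k]

/-- A polynomial not vanishing at the origin is a unit modulo every power of the maximal ideal. -/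
lemma mem_pow_idealOfVars_of_mul_mem {u x : MvPolynomial σ k} {N : ℕ}
    (hu : constantCoeff u ≠ 0) (h : u * x ∈ idealOfVars σ k ^ N) : x ∈ idealOfVars σ k ^ N := by
  have hsub : u - C (constantCoeff u) ∈ idealOfVars σ k := by
    rw [← pow_one (idealOfVars σ k), mem_pow_idealOfVars_iff']
    intro γ hγ
    obtain rfl : γ = 0 := (Finsupp.degree_eq_zero_iff γ).mp (by omega)
    simp [constantCoeff_eq]
  have hcop : IsCoprime (Ideal.span {u}) (idealOfVars σ k) := by
    refine Ideal.isCoprime_iff_exists.2 ⟨C (constantCoeff u)⁻¹ * u,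
      Ideal.mul_mem_left _ _ (Ideal.mem_span_singleton_self u),
      -(C (constantCoeff u)⁻¹ * (u - C (constantCoeff u))),
      neg_mem (Ideal.mul_mem_left _ _ hsub), ?_⟩
    rw [mul_sub, ← C_mul, inv_mul_cancel₀ hu, C_1, ← sub_eq_add_neg, sub_sub_cancel]
  obtain ⟨y, hy, z, hz, hyz⟩ := Ideal.isCoprime_iff_exists.1 (hcop.pow_right (n := N))
  obtain ⟨w, rfl⟩ := Ideal.mem_span_singleton'.mp hy
  have hx : x = w * (u * x) + z * x := by linear_combination -x * hyz
  rw [hx]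
  exact add_mem (Ideal.mul_mem_left _ _ h) (Ideal.mul_mem_right _ _ hz)

lemma eq_zero_of_translate_mul_mem_pow {p : σ → k} {u x : MvPolynomial σ k} {N : ℕ}
    (hu : eval p u ≠ 0) (hx : x.totalDegree < N)
    (h : translate p (u * x) ∈ idealOfVars σ k ^ N) : x = 0 := by
  rw [map_mul] at h
  have hzero : translate p x = 0 :=
    eq_zero_of_mem_pow_idealOfVars ((totalDegree_translate_le p x).trans_lt hx)
      (mem_pow_idealOfVars_of_mul_mem (by rwa [constantCoeff_translate]) h)
  simpa using hzero

end Vanishing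

section PrimitivePart

open MvPolynomial

lemma coeff_coeff_commAlgEquiv {R σ τ : Type*} [CommSemiring R]
    (p : MvPolynomial τ (MvPolynomial σ R)) (μ : τ →₀ ℕ) (γ : σ →₀ ℕ) :
    ((commAlgEquiv R τ σ p).coeff γ).coeff μ = (p.coeff μ).coeff γ := by
  classical
  have hmonomial (u v) (a : R) : commAlgEquiv R τ σ (monomial u (monomial v a)) =
      monomial v (monomial u a) :=
    AddMonoidAlgebra.commAlgEquiv_single_single ..
  induction p using induction_on' with
  | monomial u a =>
    induction a using induction_on' with
    | monomial v a =>
      rw [hmonomial]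
      simp only [coeff_monomial]
      split_ifs <;> simp [coeff_monomial, *]
    | add p q hp hq => simp only [map_add, coeff_add, hp, hq]
  | add p q hp hq => simp only [map_add, coeff_add, hp, hq]

lemma totalDegree_le_iff_forall_coeff_eq_zero {R σ : Type*} [CommSemiring R]
    {q : MvPolynomial σ R} {δ : ℕ} :
    q.totalDegree ≤ δ ↔ ∀ γ : σ →₀ ℕ, δ < γ.degree → q.coeff γ = 0 := by
  refine ⟨fun h γ hγ => coeff_eq_zero_of_totalDegree_lt (h.trans_lt hγ),
    fun h => Finset.sup_le fun γ hγ => ?_⟩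
  by_contra! hlt
  exact mem_support_iff.mp hγ (h γ hlt)

variable {k σ τ : Type*} [CommRing k]

lemma mem_coeffFiltration_totalDegreeFiltration {p : MvPolynomial τ (MvPolynomial σ k)} {δ : ℕ} :
    p ∈ coeffFiltration τ (totalDegreeFiltration σ k) δ ↔
      (commAlgEquiv k τ σ p).totalDegree ≤ δ := by
  simp only [mem_coeffFiltration, mem_totalDegreeFiltration,
    totalDegree_le_iff_forall_coeff_eq_zero, MvPolynomial.ext_iff, coeff_coeff_commAlgEquiv,
    coeff_zero]
  exact ⟨fun h γ hγ μ => h μ γ hγ, fun h μ γ hγ => h γ hγ μ⟩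

/-- After exchanging the two sets of variables, the degree of the coefficients becomes a total
degree, which is additive over a domain. -/
lemma mem_coeffFiltration_of_dvd [IsDomain k] {Φ ψ : MvPolynomial τ (MvPolynomial σ k)}
    (hΦ : Φ ≠ 0) (hdvd : ψ ∣ Φ) {δ : ℕ}
    (hδ : Φ ∈ coeffFiltration τ (totalDegreeFiltration σ k) δ) :
    ψ ∈ coeffFiltration τ (totalDegreeFiltration σ k) δ := by
  rw [mem_coeffFiltration_totalDegreeFiltration] at hδ ⊢
  exact (totalDegree_le_of_dvd_of_isDomain (map_dvd _ hdvd) (by simpa using hΦ)).trans hδ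

/-- Gauss's lemma: the hypothesis says that `φ` divides `Φ` over the fraction field of `A`. -/
lemma exists_C_mul_eq_and_dvd {A : Type*} [CommRing A] [IsDomain A] [UniqueFactorizationMonoid A]
    {c : A} (hc : c ≠ 0) {Φ φ : MvPolynomial τ A} (h : φ ∣ C c * Φ) :
    ∃ (c' : A) (ψ : MvPolynomial τ A), c' ≠ 0 ∧ C c' * ψ = φ ∧ ψ ∣ Φ := by
  induction c using UniqueFactorizationMonoid.induction_on_prime generalizing φ with
  | h₁ => exact absurd rfl hc
  | h₂ u hu => exact ⟨1, φ, one_ne_zero, by simp, (hu.map C).dvd_mul_left.1 h⟩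
  | h₃ a p ha hp ih =>
    have hpC : Prime (C p : MvPolynomial τ A) := (prime_C_iff τ).mpr hp
    obtain ⟨χ, hχ⟩ := h
    rw [C_mul, mul_assoc] at hχ
    rcases hpC.dvd_or_dvd (Dvd.intro _ hχ) with ⟨x, rfl⟩ | ⟨x, rfl⟩
    · obtain ⟨c', ψ, hc', hψ, hdvd⟩ :=
        ih ha (φ := x) ⟨χ, mul_left_cancel₀ hpC.ne_zero (hχ.trans (mul_assoc _ _ _))⟩
      exact ⟨p * c', ψ, mul_ne_zero hp.ne_zero hc', by rw [C_mul, mul_assoc, hψ], hdvd⟩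
    · exact ih ha ⟨x, mul_left_cancel₀ hpC.ne_zero (by rw [hχ]; ring)⟩

lemma totalDegree_C_mul_of_ne_zero {A : Type*} [CommRing A] [IsDomain A] {c : A} (hc : c ≠ 0)
    (p : MvPolynomial τ A) : (C c * p).totalDegree = p.totalDegree := by
  rcases eq_or_ne p 0 with rfl | hp
  · simp
  · rw [totalDegree_mul_of_isDomain (by simpa using hc) hp, totalDegree_C, zero_add]

lemma totalDegree_eval_le {Ψ : MvPolynomial τ (MvPolynomial σ k)} {δ D t : ℕ}
    (hδ : Ψ ∈ coeffFiltration τ (totalDegreeFiltration σ k) δ) (hD : Ψ.totalDegree ≤ D)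
    {α : τ → MvPolynomial σ k} (hα : ∀ i, (α i).totalDegree ≤ t) :
    (eval α Ψ).totalDegree ≤ δ + D * t := by
  rw [eval_eq]
  refine totalDegree_finsetSum_le fun μ hμ => (totalDegree_mul _ _).trans (add_le_add
    (mem_totalDegreeFiltration.1 (mem_coeffFiltration.1 hδ μ)) ?_)
  calc (∏ i ∈ μ.support, α i ^ μ i).totalDegree
      ≤ ∑ i ∈ μ.support, (α i ^ μ i).totalDegree := totalDegree_finsetProd _ _
    _ ≤ ∑ i ∈ μ.support, μ i * t := Finset.sum_le_sum fun i _ =>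
        (totalDegree_pow _ _).trans (Nat.mul_le_mul_left _ (hα i))
    _ = μ.degree * t := by rw [← Finset.sum_mul]; rfl
    _ ≤ D * t := Nat.mul_le_mul_right _ ((le_totalDegree hμ).trans hD)

end PrimitivePart

section DeterminantalForm

open Matrix MvPolynomial

variable {A ι κ ε : Type*} [CommRing A] [Fintype ι] [Fintype κ] [Fintype ε] [DecidableEq ε]

/-- The determinant of the generic combination `∑ i, X i • N i` of the square matrices `N i`. -/
noncomputable def detForm (N : ι → Matrix ε ε A) : MvPolynomial ι A :=
  (∑ i, (X i : MvPolynomial ι A) • (N i).map C).det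

lemma eval_detForm (N : ι → Matrix ε ε A) (α : ι → A) :
    eval α (detForm N) = (∑ i, α i • N i).det := by
  rw [detForm, RingHom.map_det]
  congr 1
  ext x y
  simp [Matrix.sum_apply]

lemma map_detForm {B : Type*} [CommRing B] (f : A →+* B) (N : ι → Matrix ε ε A) :
    map f (detForm N) = detForm fun i => (N i).map f := by
  rw [detForm, RingHom.map_det, detForm]
  congr 1
  ext x y : 2
  simp [Matrix.sum_apply]

lemma totalDegree_detForm_le [Nontrivial A] (N : ι → Matrix ε ε A) :
    (detForm N).totalDegree ≤ Fintype.card ε := by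
  rw [← mem_totalDegreeFiltration, ← mul_one (Fintype.card ε)]
  refine det_mem_graded _ fun x y => ?_
  rw [Matrix.sum_apply]
  refine sum_mem fun i _ => mem_totalDegreeFiltration.2 ((totalDegree_mul _ _).trans ?_)
  simp

lemma detForm_mem_coeffFiltration (F : ℕ → AddSubgroup A) [IsDegreeFiltration F] {b : ℕ}
    {N : ι → Matrix ε ε A} (hN : ∀ i x y, N i x y ∈ F b) :
    detForm N ∈ coeffFiltration ι F (Fintype.card ε * b) := by
  classical
  refine det_mem_graded _ fun x y => mem_coeffFiltration.2 fun γ => ?_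
  simp only [Matrix.sum_apply, Matrix.smul_apply, Matrix.map_apply, smul_eq_mul, coeff_sum,
    mul_comm (X _), coeff_C_mul, coeff_X]
  exact sum_mem fun i _ => by split_ifs <;> simp [hN i x y]

lemma map_eval_detForm_mem_pow {B : Type*} [CommRing B] (f : A →+* B) (J : Ideal B) {τ : ℕ}
    {q : ι → κ → A} (m : κ → Matrix ε ε A) {α : ι → A}
    (hα : ∀ l, f (∑ i, α i * q i l) ∈ J ^ τ) :
    f (eval α (detForm fun i => ∑ l, q i l • m l)) ∈ J ^ (Fintype.card ε * τ) := by
  have hcomb : ∑ i, α i • ∑ l, q i l • m l = ∑ l, (∑ i, α i * q i l) • m l := by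
    simp only [Finset.smul_sum, Finset.sum_smul, mul_smul]
    exact Finset.sum_comm
  rw [eval_detForm, hcomb, RingHom.map_det]
  refine det_mem_graded (fun t => J ^ t) fun x y => ?_
  simp only [RingHom.mapMatrix_apply, Matrix.map_apply, Matrix.sum_apply, Matrix.smul_apply,
    smul_eq_mul, map_sum f, map_mul f]
  simp only [map_sum, map_mul] at hα
  exact sum_mem fun l _ => Ideal.mul_mem_right _ _ (hα l)

/-- A zero of high order at a point forces a zero: the primitive part of the determinantal form
inherits the coefficient degrees of `Φ`, so its value has degree less than its order. -/
lemma exists_eval_detForm_eq_zero {k σ : Type*} [Field k] [Infinite k] [Fintype σ] [Nonempty ε]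
    {δ : ℕ} (hcard : Fintype.card κ < Fintype.card ι) (q : ι → κ → MvPolynomial σ k)
    (m : κ → Matrix ε ε (MvPolynomial σ k)) {Φ : MvPolynomial ι (MvPolynomial σ k)} (hΦ : Φ ≠ 0)
    (hδ : Φ ∈ coeffFiltration ι (totalDegreeFiltration σ k) δ) {c : MvPolynomial σ k} (hc : c ≠ 0)
    (hdvd : detForm (fun i => ∑ l, q i l • m l) ∣ C c * Φ) :
    ∃ α : ι → MvPolynomial σ k, α ≠ 0 ∧
      (∀ i, (α i).totalDegree ≤ Fintype.card σ * Fintype.card ι * δ) ∧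
      eval α (detForm fun i => ∑ l, q i l • m l) = 0 := by
  set t := Fintype.card σ * Fintype.card ι * δ with ht
  set E := Fintype.card ε
  set N : ι → Matrix ε ε (MvPolynomial σ k) := fun i => ∑ l, q i l • m l
  obtain ⟨c₁, ψ, hc₁, hψ, hψΦ⟩ := exists_C_mul_eq_and_dvd hc hdvd
  have hψE : ψ.totalDegree ≤ E := by
    rw [← totalDegree_C_mul_of_ne_zero hc₁, hψ]
    exact totalDegree_detForm_le N
  obtain ⟨p, hp⟩ : ∃ p : σ → k, eval p c₁ ≠ 0 := by
    by_contra! h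
    exact hc₁ (MvPolynomial.funext fun x => by rw [h x, map_zero])
  obtain ⟨α, hα₀, hαt, hα⟩ := exists_ne_zero_forall_mem_pow_idealOfVars (t := t) (δ := δ) hcard
    (by rw [ht, mul_comm, ← mul_assoc]; omega) fun l =>
      (translate p).toLinearMap ∘ₗ ∑ i, LinearMap.mulRight k (q i l) ∘ₗ LinearMap.proj i
  have heval : eval α (detForm N) = c₁ * eval α ψ := by rw [← hψ, map_mul, eval_C]
  have horder : translate p (c₁ * eval α ψ) ∈ idealOfVars σ k ^ (E * (t + δ + 1)) := by
    rw [← heval]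
    exact map_eval_detForm_mem_pow (translate p : _ →+* MvPolynomial σ k) _ m
      fun l => by simpa using hα l
  have hdeg : (eval α ψ).totalDegree < E * (t + δ + 1) := by
    refine (totalDegree_eval_le (mem_coeffFiltration_of_dvd hΦ hψΦ hδ) hψE hαt).trans_lt ?_
    have hpos : 0 < E := Fintype.card_pos
    nlinarith
  refine ⟨α, hα₀, hαt, ?_⟩
  rw [heval, eq_zero_of_translate_mul_mem_pow hp hdeg horder, mul_zero]

end DeterminantalForm

section NormForm

open Matrix MvPolynomial

variable {K L : Type*} [Field K] [CommRing L] [Algebra K L]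

lemma norm_eq_det_lsmul_mul_norm_quotient [Module.Finite K L] (J : Ideal L)
    (f : L) :
    Algebra.norm K f =
      (Algebra.lsmul K K J f).det * Algebra.norm K (Ideal.Quotient.mk J f) := by
  let e := Submodule.Quotient.restrictScalarsEquiv K J
  have hJ : J.restrictScalars K ≤ (J.restrictScalars K).comap (Algebra.lmul K L f) :=
    fun x hx => J.mul_mem_left f hx
  have hquot : (J.restrictScalars K).mapQ _ (Algebra.lmul K L f) hJ =
      e.symm.toLinearMap ∘ₗ Algebra.lmul K (L ⧸ J) (Ideal.Quotient.mk J f) ∘ₗ e.toLinearMap := by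
    ext x
    rfl
  rw [Algebra.norm_apply, Algebra.norm_apply,
    LinearMap.det_eq_det_mul_det (J.restrictScalars K) (Algebra.lmul K L f) hJ, hquot]
  congr 1
  exact LinearMap.det_conj (Algebra.lmul K (L ⧸ J) (Ideal.Quotient.mk J f)) e.symm

variable {A ι ε : Type*} [CommRing A] [Algebra A K]

section CommonDenominator

variable [IsDomain A] [IsFractionRing A K] [Finite ι]

lemma exists_forall_algebraMap_eq_mul (f : ι → K) :
    ∃ g : A, g ≠ 0 ∧ ∃ f' : ι → A, ∀ i, algebraMap A K (f' i) = algebraMap A K g * f i := by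
  obtain ⟨g, hg⟩ := IsLocalization.exist_integer_multiples_of_finite (nonZeroDivisors A) f
  choose f' hf' using hg
  exact ⟨g, nonZeroDivisors.ne_zero g.2, f', fun i => by rw [hf' i, Algebra.smul_def]⟩

lemma exists_forall_map_eq_smul [Finite ε] (M : ι → Matrix ε ε K) :
    ∃ g : A, g ≠ 0 ∧ ∃ N : ι → Matrix ε ε A,
      ∀ i, (N i).map (algebraMap A K) = algebraMap A K g • M i := by
  obtain ⟨g, hg, N, hN⟩ := exists_forall_algebraMap_eq_mul (A := A)
    fun x : ι × ε × ε => M x.1 x.2.1 x.2.2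
  exact ⟨g, hg, fun i => of fun x y => N (i, x, y), fun i => by ext x y; simp [hN]⟩

end CommonDenominator

variable [Fintype ι] [Fintype ε] [DecidableEq ε]

lemma finrank_quotient_lt [Module.Finite K L] {J : Ideal L} (hJ : J ≠ ⊥) :
    Module.finrank K (L ⧸ J) < Module.finrank K L := by
  have hpos : 0 < Module.finrank K (J.restrictScalars K) :=
    Module.finrank_pos_iff.2 ((Submodule.nontrivial_iff_ne_bot).2 (by simpa using hJ))
  have hsum := (J.restrictScalars K).finrank_quotient_add_finrank
  rw [(Submodule.Quotient.restrictScalarsEquiv K J).finrank_eq] at hsum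
  omega

lemma eval_map_detForm {V : Type*} [AddCommGroup V] [Module K V] (ρ : L →ₗ[K] Module.End K V)
    (v : Module.Basis ι K L) (u : Module.Basis ε K V) {N : ι → Matrix ε ε A} {g : A}
    (hN : ∀ i, (N i).map (algebraMap A K) =
      algebraMap A K g • LinearMap.toMatrix u u (ρ (v i))) (f : L) :
    eval (v.repr f) (map (algebraMap A K) (detForm N)) =
      algebraMap A K g ^ Fintype.card ε * (ρ f).det := by
  conv_rhs => rw [← v.sum_repr f]
  rw [map_detForm, eval_detForm, ← LinearMap.det_toMatrix u, ← Matrix.det_smul]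
  simp only [hN, map_sum, map_smul, Finset.smul_sum, smul_comm (algebraMap A K g)]

lemma eval_map_detForm_leftMulMatrix {B : Type*} [CommRing B] [Algebra K B] (φ : L →ₐ[K] B)
    (v : Module.Basis ι K L) (u : Module.Basis ε K B) {N : ι → Matrix ε ε A} {g : A}
    (hN : ∀ i, (N i).map (algebraMap A K) =
      algebraMap A K g • Algebra.leftMulMatrix u (φ (v i))) (f : L) :
    eval (v.repr f) (map (algebraMap A K) (detForm N)) =
      algebraMap A K g ^ Fintype.card ε * Algebra.norm K (φ f) :=
  eval_map_detForm ((Algebra.lmul K B).toLinearMap ∘ₗ φ.toLinearMap) v u hN f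

lemma exists_map_sum_smul_eq_smul_leftMulMatrix {κ : Type*} [Finite κ] [IsDomain A]
    [IsFractionRing A K] (u : Module.Basis ε K L) (w : κ → L) :
    ∃ g : A, g ≠ 0 ∧ ∃ (q : κ → ε → A) (m : ε → Matrix ε ε A), ∀ i,
      (∑ l, q i l • m l).map (algebraMap A K) =
        algebraMap A K g • Algebra.leftMulMatrix u (w i) := by
  obtain ⟨g₁, hg₁, q, hq⟩ := exists_forall_algebraMap_eq_mul (A := A)
    fun x : κ × ε => u.repr (w x.1) x.2
  obtain ⟨g₂, hg₂, m, hm⟩ := exists_forall_map_eq_smul (A := A)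
    fun l => Algebra.leftMulMatrix u (u l)
  refine ⟨g₁ * g₂, mul_ne_zero hg₁ hg₂, fun i l => q (i, l), m, fun i => ?_⟩
  have hterm (l : ε) : (q (i, l) • m l).map (algebraMap A K) = algebraMap A K (g₁ * g₂) •
      u.repr (w i) l • Algebra.leftMulMatrix u (u l) := by
    rw [Matrix.map_smul' _ _ _ (map_mul _), hm, hq, smul_smul, smul_smul, map_mul]
    ring_nf
  conv_rhs => rw [← u.sum_repr (w i)]
  simp only [map_sum, map_smul, Finset.smul_sum, ← hterm]
  exact map_sum (algebraMap A K).mapMatrix _ _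

lemma detForm_dvd_C_mul_detForm [IsDomain A] [IsFractionRing A K] [Infinite K] [DecidableEq ι]
    {v : Module.Basis ι K L} {a : ι → Matrix ι ι A} {s : A}
    (ha : ∀ i, (a i).map (algebraMap A K) = algebraMap A K s • Algebra.leftMulMatrix v (v i))
    {J : Ideal L} {u : Module.Basis ε K (L ⧸ J)} {N : ι → Matrix ε ε A} {g : A} (hg : g ≠ 0)
    (hN : ∀ i, (N i).map (algebraMap A K) =
      algebraMap A K g • Algebra.leftMulMatrix u (Ideal.Quotient.mk J (v i))) :
    ∃ c : A, c ≠ 0 ∧ detForm N ∣ C c * detForm a := by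
  have : Module.Finite K L := Module.Finite.of_basis v
  let u' := Module.finBasis K J
  obtain ⟨g', hg', N', hN'⟩ := exists_forall_map_eq_smul (A := A)
    fun i => LinearMap.toMatrix u' u' (Algebra.lsmul K K J (v i))
  refine ⟨g ^ Fintype.card ε * g' ^ Module.finrank K J,
    mul_ne_zero (pow_ne_zero _ hg) (pow_ne_zero _ hg'), C (s ^ Fintype.card ι) * detForm N', ?_⟩
  refine map_injective _ (IsFractionRing.injective A K) (MvPolynomial.funext fun T => ?_)
  obtain ⟨f, rfl⟩ : ∃ f, v.repr f = T  :=
    ⟨v.equivFun.symm T, v.equivFun.apply_symm_apply T⟩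
  have hL := eval_map_detForm_leftMulMatrix (AlgHom.id K L) v v ha f
  have hquot := eval_map_detForm_leftMulMatrix (Ideal.Quotient.mkₐ K J) v u hN f
  have hJ := eval_map_detForm (Algebra.lsmul K K J).toLinearMap v u' hN' f
  rw [AlgHom.id_apply, norm_eq_det_lsmul_mul_norm_quotient J f] at hL
  simp only [map_mul, map_C, eval_C, map_pow, hL, hquot, hJ, Fintype.card_fin,
    AlgHom.toLinearMap_apply, Ideal.Quotient.mkₐ_eq_mk]
  ring

/-- If `J` is a proper nonzero ideal of `L`, then `L ⧸ J` acts through fewer matrices than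
`dim L`, so that the determinant of the action on `L ⧸ J` has a small zero. -/
theorem exists_not_isUnit_of_not_isField {k σ : Type*} [Field k] [Infinite k] [Fintype σ]
    [Algebra (MvPolynomial σ k) K] [IsFractionRing (MvPolynomial σ k) K] [Nontrivial L]
    [DecidableEq ι] {h : ℕ} {v : Module.Basis ι K L} {s : MvPolynomial σ k} (hs : s ≠ 0)
    {a : ι → Matrix ι ι (MvPolynomial σ k)}
    (ha : ∀ i, (a i).map (algebraMap _ K) = algebraMap _ K s • Algebra.leftMulMatrix v (v i))
    (hdeg : ∀ i j l, (a i j l).totalDegree ≤ h) (hL : ¬ IsField L) :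
    ∃ α : ι → MvPolynomial σ k, α ≠ 0 ∧
      (∀ i, (α i).totalDegree ≤ Fintype.card σ * Fintype.card ι * (Fintype.card ι * h)) ∧
      ¬ IsUnit (∑ i, algebraMap _ K (α i) • v i) := by
  have hinj := IsFractionRing.injective (MvPolynomial σ k) K
  have : Module.Finite K L := Module.Finite.of_basis v
  have : Infinite K := Infinite.of_injective _ (hinj.comp (C_injective σ k))
  obtain ⟨J, hJ₀, hJ₁⟩ := (Ring.not_isField_iff_exists_ideal_bot_lt_and_lt_top).mp hL
  have : Nontrivial (L ⧸ J) := Ideal.Quotient.nontrivial_iff.2 hJ₁.ne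
  have : NeZero (Module.finrank K (L ⧸ J)) := ⟨Module.finrank_pos.ne'⟩
  have hcard : Fintype.card (Fin (Module.finrank K (L ⧸ J))) < Fintype.card ι := by
    rw [Fintype.card_fin, ← Module.finrank_eq_card_basis v]
    exact finrank_quotient_lt hJ₀.ne'
  let u := Module.finBasis K (L ⧸ J)
  obtain ⟨g, hg, q, m, hqm⟩ := exists_map_sum_smul_eq_smul_leftMulMatrix
    (A := MvPolynomial σ k) u fun i => Ideal.Quotient.mk J (v i)
  obtain ⟨c, hc, hdvd⟩ := detForm_dvd_C_mul_detForm ha hg hqm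
  have hΦ : detForm a ≠ 0 := by
    intro h₀
    have h₁ := eval_map_detForm_leftMulMatrix (AlgHom.id K L) v v ha 1
    rw [h₀, map_zero, map_zero, map_one, map_one, mul_one, ← map_pow] at h₁
    exact pow_ne_zero _ hs (hinj (h₁.symm.trans (map_zero _).symm))
  obtain ⟨α, hα₀, hαdeg, hα⟩ := exists_eval_detForm_eq_zero hcard q m hΦ
    (detForm_mem_coeffFiltration _ fun i j l => mem_totalDegreeFiltration.2 (hdeg i j l)) hc hdvd
  refine ⟨α, hα₀, hαdeg, fun hunit => ?_⟩
  have hnorm : Algebra.norm K (Ideal.Quotient.mkₐ K J (∑ i, algebraMap _ K (α i) • v i)) ≠ 0 :=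
    ((hunit.map _).map _).ne_zero
  have heval := eval_map_detForm_leftMulMatrix (Ideal.Quotient.mkₐ K J) v u hqm
    (∑ i, algebraMap _ K (α i) • v i)
  have hzero := congrArg (algebraMap _ K) hα
  rw [eval₂_comp, map_zero] at hzero
  rw [v.repr_sum_self, eval_map] at heval
  exact mul_ne_zero (pow_ne_zero _ ((map_ne_zero_iff _ hinj).2 hg)) hnorm
    (heval.symm.trans hzero)

end NormForm

section MonomialBasis

variable {K L : Type*} [Field K] [CommRing L] [Algebra K L] {e : ℕ}

lemma exists_pow_eq_sum_smul_pow {y : L} {q : Polynomial K} (hq : 0 < q.natDegree)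
    (hqe : q.natDegree ≤ e) (hy : Polynomial.aeval y q = 0) (r : ℕ) :
    ∃ a : Fin e → K, y ^ r = ∑ i, a i • y ^ (i : ℕ) := by
  have hlt : (Polynomial.X ^ r % q).natDegree < e :=
    (Polynomial.natDegree_mod_lt _ hq.ne').trans_le hqe
  refine ⟨fun i => (Polynomial.X ^ r % q).coeff i, ?_⟩
  have hmod : y ^ r = Polynomial.aeval y (Polynomial.X ^ r % q) := by
    have h := congrArg (Polynomial.aeval y) (EuclideanDomain.div_add_mod (Polynomial.X ^ r) q)
    rw [map_add, map_mul, hy, zero_mul, zero_add] at h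
    simpa using h.symm
  rw [hmod, Polynomial.aeval_eq_sum_range' hlt, Finset.sum_range]

variable {τ : Type*} [Fintype τ] {y : τ → L}

lemma span_range_prod_pow_eq_top
    (halg : ∀ j, ∃ q : Polynomial K, 0 < q.natDegree ∧ q.natDegree ≤ e ∧
      Polynomial.aeval (y j) q = 0) (hy : Algebra.adjoin K (Set.range y) = ⊤) :
    Submodule.span K (Set.range fun x : τ → Fin e => ∏ j, y j ^ (x j : ℕ)) = ⊤ := by
  classical
  choose q hq hqe hqy using halg
  rw [eq_top_iff, ← Algebra.top_toSubmodule, ← hy, Algebra.adjoin_range_eq_range_aeval]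
  rintro _ ⟨p, rfl⟩
  induction p using MvPolynomial.induction_on' with
  | add p q hp hq => exact map_add (MvPolynomial.aeval y) p q ▸ add_mem hp hq
  | monomial γ c =>
    choose a ha using fun j => exists_pow_eq_sum_smul_pow (hq j) (hqe j) (hqy j) (γ j)
    change MvPolynomial.aeval y _ ∈ _
    rw [MvPolynomial.aeval_monomial, Finsupp.prod_fintype _ _ (by simp), ← Algebra.smul_def]
    simp only [ha, Finset.prod_univ_sum, Finset.prod_smul]
    exact Submodule.smul_mem _ _ <| Submodule.sum_mem _ fun x _ =>
      Submodule.smul_mem _ _ (Submodule.subset_span ⟨x, rfl⟩)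

lemma exists_monomial_basis
    (halg : ∀ j, ∃ q : Polynomial K, 0 < q.natDegree ∧ q.natDegree ≤ e ∧
      Polynomial.aeval (y j) q = 0) (hy : Algebra.adjoin K (Set.range y) = ⊤) :
    ∃ (T : Finset (τ → Fin e)) (v : Module.Basis T K L), ∀ x : T, v x = ∏ j, y j ^ (x.1 j : ℕ) := by
  classical
  obtain ⟨T, -, -, hT, hli⟩ := exists_linearIndepOn_extension
    (linearIndepOn_empty K fun x : τ → Fin e => ∏ j, y j ^ (x j : ℕ)) (Set.empty_subset Set.univ)
  have hspan := span_range_prod_pow_eq_top halg hy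
  rw [← Set.image_univ] at hspan
  have hT_top : ⊤ ≤ Submodule.span K (Set.range fun x : T => ∏ j, y j ^ (x.1 j : ℕ)) := by
    rw [← hspan, Submodule.span_le]
    simpa only [Set.image_eq_range] using hT
  refine ⟨T.toFinset, (Module.Basis.mk hli.linearIndependent hT_top).reindex
    (Equiv.subtypeEquivRight (by simp)), fun x => ?_⟩
  rw [Module.Basis.reindex_apply, Module.Basis.mk_apply]
  rfl

end MonomialBasis

section CommonMultiplier

variable {A : Type*} [CommRing A]

lemma exists_forall_smul_eq_sum_smul [IsDomain A] (F : ℕ → AddSubgroup A) [IsDegreeFiltration F]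
    {M ξ κ : Type*} [AddCommGroup M] [Module A M] [Fintype ξ] [Fintype κ] {z : ξ → M} {w : κ → M}
    {H : ℕ} (h : ∀ x, ∃ (c : A) (b : κ → A), c ≠ 0 ∧ c ∈ F H ∧ (∀ k, b k ∈ F H) ∧
      c • z x = ∑ k, b k • w k) :
    ∃ s ≠ 0, s ∈ F (Fintype.card ξ * H) ∧ ∀ x, ∃ a : κ → A,
      (∀ k, a k ∈ F (Fintype.card ξ * H)) ∧ s • z x = ∑ k, a k • w k := by
  classical
  choose c b hc hcF hbF hcb using h
  have hprod (X : Finset ξ) : ∏ x ∈ X, c x ∈ F (X.card * H) := by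
    simpa using SetLike.prod_mem_graded F (fun _ => H) c (F := X) fun x _ => hcF x
  refine ⟨∏ x, c x, Finset.prod_ne_zero_iff.mpr fun x _ => hc x, hprod _, fun x => ?_⟩
  refine ⟨fun k => (∏ x' ∈ Finset.univ.erase x, c x') * b x k, fun k => ?_, ?_⟩
  · have hcard : (Finset.univ.erase x).card * H + H = Fintype.card ξ * H := by
      rw [← Nat.succ_mul, Nat.succ_eq_add_one, Finset.card_erase_add_one (Finset.mem_univ x)]
      rfl
    exact hcard ▸ SetLike.mul_mem_graded (hprod _) (hbF x k)
  · rw [← Finset.prod_erase_mul _ _ (Finset.mem_univ x), mul_smul, hcb, Finset.smul_sum]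
    simp only [mul_smul]

lemma exists_pow_smul_mem {S τ : Type*} [CommRing S] [Algebra A S] (φ : MvPolynomial τ A →ₐ[A] S)
    {M : Submodule A S} {s : A} (h1 : s • 1 ∈ M)
    (hX : ∀ w ∈ M, ∀ j, s • (w * φ (MvPolynomial.X j)) ∈ M) (p : MvPolynomial τ A) :
    ∃ N : ℕ, s ^ N • φ p ∈ M := by
  induction p using MvPolynomial.induction_on with
  | C c =>
    refine ⟨1, ?_⟩
    rw [pow_one, MvPolynomial.algHom_C, Algebra.algebraMap_eq_smul_one, smul_comm]
    exact M.smul_mem c h1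
  | add p q hp hq =>
    obtain ⟨⟨N, hN⟩, N', hN'⟩ := hp, hq
    refine ⟨N + N', ?_⟩
    rw [map_add, smul_add, pow_add]
    refine add_mem ?_ ?_
    · rw [mul_comm, mul_smul]
      exact M.smul_mem _ hN
    · rw [mul_smul]
      exact M.smul_mem _ hN'
  | mul_X p j hp =>
    obtain ⟨N, hN⟩ := hp
    refine ⟨N + 1, ?_⟩
    rw [map_mul, pow_succ', mul_smul, ← smul_mul_assoc]
    exact hX _ hN j

end CommonMultiplier

section GenericFibre

open TensorProduct nonZeroDivisors

variable {A K S : Type*} [CommRing A] [Field K] [Algebra A K] [IsFractionRing A K] [CommRing S]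
  [Algebra A S]

lemma isUnit_one_tmul [Module.Finite K (K ⊗[A] S)] {f : S} (hf : f ∈ S⁰) :
    IsUnit (1 ⊗ₜ f : K ⊗[A] S) := by
  have : IsArtinianRing (K ⊗[A] S) := .of_finite K _
  have : Module.Flat A K := IsLocalization.flat K A⁰
  refine IsArtinianRing.isUnit_of_mem_nonZeroDivisors <| mem_nonZeroDivisors_iff_right.2 ?_
  have hinj := Module.Flat.lTensor_preserves_injective_linearMap (M := K) (Algebra.lmul A S f)
    ((injective_iff_map_eq_zero _).2 fun x hx => hf.1 x hx)
  intro x hx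
  refine hinj ?_
  rw [map_zero, ← hx, mul_comm]
  exact congr($(Algebra.baseChange_lmul (A := K) f) x)

variable {κ : Type*} [Fintype κ]

lemma exists_ne_zero_smul_eq_sum_smul_of_basis [IsDomain A] {M : Type*} [AddCommGroup M]
    [Module A M] {w : κ → M} {v : Module.Basis κ K (K ⊗[A] M)} (hv : ∀ k, v k = 1 ⊗ₜ w k) (x : M) :
    ∃ (c : A) (b : κ → A), c ≠ 0 ∧ c • x = ∑ k, b k • w k := by
  obtain ⟨g, hg, b, hb⟩ := exists_forall_algebraMap_eq_mul (A := A) fun k => v.repr (1 ⊗ₜ x) k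
  have hx : TensorProduct.mk A K M 1 (g • x - ∑ k, b k • w k) = 0 := by
    have hbv (k : κ) : b k • v k = g • v.repr (1 ⊗ₜ x) k • v k := by
      rw [← algebraMap_smul K, hb, mul_smul, algebraMap_smul]
    simp only [map_sub, map_smul, map_sum, TensorProduct.mk_apply, ← hv, hbv, ← Finset.smul_sum,
      v.sum_repr, sub_self]
  obtain ⟨c, hc⟩ := (IsLocalizedModule.eq_zero_iff A⁰ _).1 hx
  refine ⟨c * g, fun k => c * b k, mul_ne_zero (nonZeroDivisors.ne_zero c.2) hg, ?_⟩
  simpa only [Submonoid.smul_def, smul_sub, sub_eq_zero, Finset.smul_sum, smul_smul] using hc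

variable {w : κ → S} {v : Module.Basis κ K (K ⊗[A] S)} {s : A}

omit [Fintype κ] in
lemma includeRight_injective_of_forall_exists_pow_smul_mem [Finite κ] (hv : ∀ k, v k = 1 ⊗ₜ w k)
    (hs : algebraMap A S s ∈ S⁰)
    (hpow : ∀ x : S, ∃ N : ℕ, s ^ N • x ∈ Submodule.span A (Set.range w)) :
    Function.Injective (Algebra.TensorProduct.includeRight : S →ₐ[A] K ⊗[A] S) := by
  have := Fintype.ofFinite κ
  refine (injective_iff_map_eq_zero _).2 fun x hx => ?_
  obtain ⟨N, hN⟩ := hpow x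
  obtain ⟨a, ha⟩ := (Submodule.mem_span_range_iff_exists_fun A).1 hN
  have hav : ∑ k, a k • v k = 0 := by
    have h := congrArg (Algebra.TensorProduct.includeRight : S →ₐ[A] K ⊗[A] S) ha
    simpa only [map_sum, map_smul, hx, smul_zero, Algebra.TensorProduct.includeRight_apply, ← hv,
      algebraMap_smul] using h
  have ha0 := Fintype.linearIndependent_iff.1
    (v.linearIndependent.restrict_scalars' A) a hav
  simp only [ha0, zero_smul, Finset.sum_const_zero] at ha
  rw [Algebra.smul_def, map_pow] at ha
  exact (pow_mem hs N).1 x ha.symm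

omit [IsFractionRing A K] in
lemma map_eq_smul_leftMulMatrix [DecidableEq κ] (hv : ∀ k, v k = 1 ⊗ₜ w k) {i : κ}
    {a : Matrix κ κ A} (ha : ∀ j, s • (w i * w j) = ∑ l, a l j • w l) :
    a.map (algebraMap A K) = algebraMap A K s • Algebra.leftMulMatrix v (v i) := by
  ext l j
  have h : algebraMap A K s • (v i * v j) = ∑ l, algebraMap A K (a l j) • v l := by
    simpa only [map_sum, map_smul, map_mul, Algebra.TensorProduct.includeRight_apply, ← hv,
      algebraMap_smul] using
      congrArg (Algebra.TensorProduct.includeRight : S →ₐ[A] K ⊗[A] S) (ha j)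
  simpa [Algebra.leftMulMatrix_eq_repr_mul, Finsupp.single_apply, -algebraMap_smul] using
    congr(v.repr $h.symm l)

end GenericFibre

section PrimalityCriterion

open TensorProduct nonZeroDivisors MvPolynomial

lemma isDomain_of_forall_mem_nonZeroDivisors {k σ K S κ : Type*} [Field k] [Infinite k] [Fintype σ]
    [Field K] [Algebra (MvPolynomial σ k) K] [IsFractionRing (MvPolynomial σ k) K] [CommRing S]
    [Nontrivial S] [Algebra (MvPolynomial σ k) S] [Fintype κ] {w : κ → S}
    {v : Module.Basis κ K (K ⊗[MvPolynomial σ k] S)} (hv : ∀ k, v k = 1 ⊗ₜ w k)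
    (hinj : Function.Injective
      (Algebra.TensorProduct.includeRight : S →ₐ[MvPolynomial σ k] K ⊗[MvPolynomial σ k] S))
    {s : MvPolynomial σ k} (hs : s ≠ 0) {a : κ → Matrix κ κ (MvPolynomial σ k)}
    (ha : ∀ i j, s • (w i * w j) = ∑ l, a i l j • w l) {h : ℕ}
    (hdeg : ∀ i l j, (a i l j).totalDegree ≤ h)
    (hreg : ∀ α : κ → MvPolynomial σ k, α ≠ 0 →
      (∀ i, (α i).totalDegree ≤ Fintype.card σ * Fintype.card κ * (Fintype.card κ * h)) →
      ∑ i, α i • w i ∈ S⁰) : IsDomain S := by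
  classical
  have : Nontrivial (K ⊗[MvPolynomial σ k] S) := hinj.nontrivial
  have : Module.Finite K (K ⊗[MvPolynomial σ k] S) := .of_basis v
  by_cases hL : IsField (K ⊗[MvPolynomial σ k] S)
  · have := hL.isDomain
    exact hinj.isDomain
  obtain ⟨α, hα, hαdeg, hunit⟩ := exists_not_isUnit_of_not_isField hs
    (fun i => map_eq_smul_leftMulMatrix hv (ha i)) hdeg hL
  have hreg_unit : IsUnit (1 ⊗ₜ ∑ i, α i • w i : K ⊗[MvPolynomial σ k] S) :=
    isUnit_one_tmul (hreg α hα hαdeg)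
  refine absurd hreg_unit ?_
  simpa only [tmul_sum, tmul_smul, ← hv, algebraMap_smul] using hunit

variable {A : Type*} [CommRing A] {m d e E : ℕ}

lemma exists_basis_one_tmul_monomial {τ S : Type*} [Finite τ] [CommRing S] [Algebra A S]
    (K : Type*) [Field K] [Algebra A K] [IsFractionRing A K] {φ : MvPolynomial τ A →ₐ[A] S}
    (hφ : Function.Surjective φ) (hinj : Function.Injective (algebraMap A S))
    (halg : ∀ j, ∃ q : Polynomial A, q ≠ 0 ∧ q.natDegree ≤ e ∧ Polynomial.aeval (φ (X j)) q = 0) :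
    ∃ (T : Finset (τ → Fin e)) (v : Module.Basis T K (K ⊗[A] S)),
      ∀ x : T, v x = 1 ⊗ₜ φ (monomial (boxExp x.1) 1) := by
  have := Fintype.ofFinite τ
  have halgK (j : τ) : ∃ q : Polynomial K, 0 < q.natDegree ∧ q.natDegree ≤ e ∧
      Polynomial.aeval (1 ⊗ₜ φ (X j) : K ⊗[A] S) q = 0 := by
    obtain ⟨q, hq, hqe, hqφ⟩ := halg j
    have hdeg : (q.map (algebraMap A K)).natDegree = q.natDegree :=
      Polynomial.natDegree_map_eq_of_injective (IsFractionRing.injective A K) q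
    refine ⟨q.map (algebraMap A K), ?_, hdeg.trans_le hqe, ?_⟩
    · rw [hdeg, Nat.pos_iff_ne_zero]
      intro hq0
      rw [Polynomial.eq_C_of_natDegree_eq_zero hq0, Polynomial.aeval_C,
        map_eq_zero_iff _ hinj] at hqφ
      rw [Polynomial.eq_C_of_natDegree_eq_zero hq0, hqφ, Polynomial.C_0] at hq
      exact hq rfl
    · rw [Polynomial.aeval_map_algebraMap, ← Algebra.TensorProduct.includeRight_apply,
        Polynomial.aeval_algHom_apply, hqφ, map_zero]
  have hgen : Algebra.adjoin K (Set.range fun j => (1 ⊗ₜ φ (X j) : K ⊗[A] S)) = ⊤ := by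
    have hS : Algebra.adjoin A (Set.range fun j => φ (X j)) = ⊤ := by
      rw [Set.range_comp' φ, Algebra.adjoin_image, adjoin_range_X, Algebra.map_top,
        AlgHom.range_eq_top]
      exact hφ
    have h := Algebra.TensorProduct.adjoin_one_tmul_image_eq_top (A := K) _ hS
    rwa [← Set.range_comp] at h
  obtain ⟨T, v, hv⟩ := exists_monomial_basis halgK hgen
  refine ⟨T, v, fun x => ?_⟩
  rw [hv, monomial_eq, Finsupp.prod_fintype _ _ (by simp)]
  simp only [← Algebra.TensorProduct.includeRight_apply, ← map_pow, ← map_prod]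
  simp [boxExp]

lemma monomial_mem_coeffFiltration {F : ℕ → AddSubgroup A} {σ : Type*} (μ : σ →₀ ℕ) {a : A}
    (ha : a ∈ F d) : monomial μ a ∈ coeffFiltration σ F d := by
  classical
  refine mem_coeffFiltration.2 fun γ => ?_
  rw [coeff_monomial]
  split_ifs
  exacts [ha, zero_mem _]

variable {S : Type*} [CommRing S] [Algebra A S] {φ : MvPolynomial (Fin m) A →ₐ[A] S}

/-- Bound for the degrees of the coefficients of the monomials of degree at most `E` in `m`
variables with respect to a monomial basis, and for the degree of their common denominator. -/
def structureBound (m E d : ℕ) : ℕ :=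
  (E + 1) ^ m * relationBound m E d

lemma exists_forall_smul_monomial_eq_sum_smul [IsDomain A] [Infinite A] {K : Type*} [Field K]
    [Algebra A K] [IsFractionRing A K] (F : ℕ → AddSubgroup A) [IsDegreeFiltration F] {ι κ : Type*}
    [Finite ι] [Fintype κ] (hE : 1 ≤ E) {f : ι → MvPolynomial (Fin m) A}
    (hφf : RingHom.ker φ = Ideal.span (Set.range f)) (hf : ∀ i, (f i).totalDegree ≤ E)
    (hfF : ∀ i, f i ∈ coeffFiltration (Fin m) F d) {ν : κ → Fin m →₀ ℕ}
    (hν : ∀ k, (ν k).degree ≤ E) {v : Module.Basis κ K (K ⊗[A] S)}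
    (hv : ∀ k, v k = 1 ⊗ₜ φ (monomial (ν k) 1)) :
    ∃ s ≠ 0, s ∈ F (structureBound m E d) ∧
      ∀ μ : Fin m →₀ ℕ, μ.degree ≤ E → ∃ a : κ → A,
        (∀ k, a k ∈ F (structureBound m E d)) ∧
        s • φ (monomial μ 1) = ∑ k, a k • φ (monomial (ν k) 1) := by
  classical
  have hdeg {μ : Fin m →₀ ℕ} (hμ : μ.degree ≤ E) : (monomial μ (1 : A)).totalDegree ≤ E :=
    (totalDegree_monomial_le μ 1).trans hμ
  have hone : (1 : A) ∈ F d := IsDegreeFiltration.mem_of_le F d.zero_le SetLike.GradedOne.one_mem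
  have hmem (c : A) (μ : Fin m →₀ ℕ) (b : κ → A) :
      c • monomial μ 1 - ∑ k, b k • monomial (ν k) 1 ∈ Ideal.span (Set.range f) ↔
        c • φ (monomial μ 1) = ∑ k, b k • φ (monomial (ν k) 1) := by
    simp only [← hφf, RingHom.mem_ker, map_sub, map_smul, map_sum, sub_eq_zero]
  obtain ⟨s, hs, hsF, hrel⟩ := exists_forall_smul_eq_sum_smul F
    (ξ := {x : Fin m → Fin (E + 1) // (boxExp x).degree ≤ E})
    (z := fun x => φ (monomial (boxExp x.1) 1)) (w := fun k => φ (monomial (ν k) 1)) fun x => by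
      obtain ⟨c, b, hc, hcb⟩ :=
        exists_ne_zero_smul_eq_sum_smul_of_basis hv (φ (monomial (boxExp x.1) 1))
      simpa only [hmem] using exists_smul_sub_sum_smul_mem_of_mem F hE hf hfF (hdeg x.2)
        (monomial_mem_coeffFiltration _ hone) (fun k => hdeg (hν k))
        (fun _ => monomial_mem_coeffFiltration _ hone) hc ((hmem _ _ _).2 hcb)
  have hcard : Fintype.card {x : Fin m → Fin (E + 1) // (boxExp x).degree ≤ E} ≤ (E + 1) ^ m :=
    (Fintype.card_subtype_le _).trans_eq (by simp)
  have hmono {a : A} := IsDegreeFiltration.mem_of_le F (x := a)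
    (Nat.mul_le_mul_right (relationBound m E d) hcard)
  refine ⟨s, hs, hmono hsF, fun μ hμ => ?_⟩
  obtain ⟨x, rfl⟩ := exists_boxExp_eq fun i => (Finsupp.le_degree i μ).trans hμ
  obtain ⟨a, haF, ha⟩ := hrel ⟨x, hμ⟩
  exact ⟨a, fun k => hmono (haF k), ha⟩

lemma exists_pow_smul_mem_span {κ : Type*} (hφ : Function.Surjective φ) {ν : κ → Fin m →₀ ℕ}
    (hν : ∀ k, (ν k).degree + 1 ≤ E) {s : A}
    (hs : ∀ μ : Fin m →₀ ℕ, μ.degree ≤ E →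
      s • φ (monomial μ 1) ∈ Submodule.span A (Set.range fun k => φ (monomial (ν k) 1))) (x : S) :
    ∃ N : ℕ, s ^ N • x ∈ Submodule.span A (Set.range fun k => φ (monomial (ν k) 1)) := by
  obtain ⟨p, rfl⟩ := hφ x
  refine exists_pow_smul_mem φ ?_ (fun w hw j => ?_) p
  · simpa using hs 0 (by simp)
  · let mulX : S →ₗ[A] S := s • LinearMap.mulRight A (φ (X j))
    have hle : Submodule.span A (Set.range fun k => φ (monomial (ν k) 1)) ≤
        (Submodule.span A (Set.range fun k => φ (monomial (ν k) 1))).comap mulX := by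
      refine Submodule.span_le.2 ?_
      rintro _ ⟨k, rfl⟩
      change s • (φ (monomial (ν k) 1) * φ (X j)) ∈ Submodule.span A _
      rw [← map_mul, X, monomial_mul, mul_one]
      exact hs _ (by simpa using hν k)
    exact hle hw

/-- The generic fibre of `S` over `k[σ]` is finite-dimensional by `halg`; were it not a field, it
would have a nonunit of small degree, contradicting `hreg`. -/
theorem isDomain_of_forall_mem_nonZeroDivisors_of_totalDegree_le {k σ ι S : Type*} [Field k]
    [Infinite k] [Fintype σ] [Finite ι] [CommRing S] [Algebra (MvPolynomial σ k) S]
    {ψ : MvPolynomial (Fin m) (MvPolynomial σ k) →ₐ[MvPolynomial σ k] S} {B : ℕ}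
    (hE : 2 * (m * e) + 1 ≤ E)
    {f : ι → MvPolynomial (Fin m) (MvPolynomial σ k)} (hψ : Function.Surjective ψ)
    (hψf : RingHom.ker ψ = Ideal.span (Set.range f)) (hf : ∀ i, (f i).totalDegree ≤ E)
    (hfF : ∀ i, f i ∈ coeffFiltration (Fin m) (totalDegreeFiltration σ k) d)
    (hinj : Function.Injective (algebraMap (MvPolynomial σ k) S))
    (halg : ∀ j, ∃ q : Polynomial (MvPolynomial σ k), q ≠ 0 ∧ q.natDegree ≤ e ∧
      Polynomial.aeval (ψ (X j)) q = 0)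
    (hB₁ : structureBound m E d ≤ B)
    (hB₂ : Fintype.card σ * e ^ m * (e ^ m * structureBound m E d) ≤ B)
    (hreg : ∀ g : MvPolynomial (Fin m) (MvPolynomial σ k), g.totalDegree ≤ m * e →
      g ∈ coeffFiltration (Fin m) (totalDegreeFiltration σ k) B → ψ g ≠ 0 → ψ g ∈ S⁰) :
    IsDomain S := by
  have : Nontrivial S := hinj.nontrivial
  let K := FractionRing (MvPolynomial σ k)
  obtain ⟨T, v, hv⟩ := exists_basis_one_tmul_monomial K hψ hinj halg
  have hν (x : T) : (boxExp x.1).degree ≤ m * e := by simpa using degree_boxExp_le x.1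
  obtain ⟨s, hs, hsF, hrel⟩ := exists_forall_smul_monomial_eq_sum_smul
    (totalDegreeFiltration σ k) (by omega) hψf hf hfF (fun x => (hν x).trans (by omega)) hv
  have hs_reg : algebraMap _ S s ∈ S⁰ := by
    have hsC : ψ (C s) = algebraMap _ S s := ψ.commutes s
    refine hsC ▸ hreg (C s) (by simp) ?_ (hsC ▸ (map_ne_zero_iff _ hinj).2 hs)
    exact monomial_mem_coeffFiltration 0 (IsDegreeFiltration.mem_of_le _ hB₁ hsF)
  have hmul (x y : T) : ∃ a : T → MvPolynomial σ k,
      (∀ l, a l ∈ totalDegreeFiltration σ k (structureBound m E d)) ∧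
      s • (ψ (monomial (boxExp x.1) 1) * ψ (monomial (boxExp y.1) 1)) =
        ∑ l : T, a l • ψ (monomial (boxExp l.1) 1) := by
    rw [← map_mul, monomial_mul, mul_one]
    exact hrel _ (by rw [map_add]; have := hν x; have := hν y; omega)
  choose a haF ha using hmul
  refine isDomain_of_forall_mem_nonZeroDivisors hv
    (includeRight_injective_of_forall_exists_pow_smul_mem hv hs_reg <|
      exists_pow_smul_mem_span hψ (E := E) (fun x => by have := hν x; omega) fun μ hμ => ?_)
    hs (a := fun x => .of fun l y => a x y l) ha
    (fun x l y => mem_totalDegreeFiltration.1 (haF x y l)) fun α hα hαdeg => ?_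
  · obtain ⟨b, -, hb⟩ := hrel μ hμ
    exact hb ▸ sum_mem fun l _ => Submodule.smul_mem _ _ (Submodule.subset_span ⟨l, rfl⟩)
  · have hψα : ψ (∑ x, α x • monomial (boxExp x.1) 1) = ∑ x, α x • ψ (monomial (boxExp x.1) 1) := by
      simp only [map_sum, map_smul]
    have hcard : T.card ≤ e ^ m := (Finset.card_le_univ T).trans_eq (by simp)
    rw [← hψα]
    refine hreg _ ?_ ?_ ?_
    · exact totalDegree_finsetSum_le fun x _ => (totalDegree_smul_le _ _).trans <|
        (totalDegree_monomial_le _ _).trans (hν x)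
    · refine sum_mem fun x _ => ?_
      rw [smul_monomial, smul_eq_mul, mul_one]
      refine monomial_mem_coeffFiltration _ (mem_totalDegreeFiltration.2 ?_)
      refine (hαdeg x).trans (le_trans ?_ hB₂)
      rw [Fintype.card_coe]
      gcongr
    · intro h0
      refine hα (funext (Fintype.linearIndependent_iff.1 (v.linearIndependent.restrict_scalars'
        (MvPolynomial σ k)) α ?_))
      simp only [hv, ← tmul_smul, ← tmul_sum, ← hψα, h0, tmul_zero]

end PrimalityCriterion

section SplitVars

open MvPolynomial

variable {k σ τ υ : Type*} [CommRing k] (ε : τ ⊕ υ ≃ σ)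

/-- The polynomial ring in the variables `σ = τ ⊕ υ`, seen as the polynomial ring in the variables
`τ` whose coefficients are the polynomials in the variables `υ`. -/
noncomputable def splitVars : MvPolynomial σ k ≃ₐ[k] MvPolynomial τ (MvPolynomial υ k) :=
  (renameEquiv k ε.symm).trans (sumAlgEquiv k τ υ)

lemma splitVars_X (x : τ ⊕ υ) : splitVars (k := k) ε (X (ε x)) = x.elim X fun u => C (X u) := by
  cases x <;> simp [splitVars]

lemma splitVars_eq_aeval (p : MvPolynomial σ k) :
    splitVars ε p = aeval (fun i => (ε.symm i).elim X fun u => C (X u)) p := by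
  refine DFunLike.congr_fun (f := (splitVars ε).toAlgHom) (algHom_ext fun i => ?_) p
  obtain ⟨x, rfl⟩ := ε.surjective i
  simpa using splitVars_X ε x

lemma splitVars_symm_X (j : τ) : (splitVars (k := k) ε).symm (X j) = X (ε (.inl j)) := by
  simp [splitVars]

lemma splitVars_symm_C (c : MvPolynomial υ k) :
    (splitVars ε).symm (C c) = rename (ε ∘ .inr) c := by
  have h : ((splitVars ε).symm.toAlgHom.comp
      (IsScalarTower.toAlgHom k (MvPolynomial υ k) (MvPolynomial τ (MvPolynomial υ k)))) =
        rename (ε ∘ .inr) := by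
    ext u : 1
    simp [splitVars]
  exact DFunLike.congr_fun h c

lemma totalDegree_splitVars_le (p : MvPolynomial σ k) :
    (splitVars ε p).totalDegree ≤ p.totalDegree := by
  rw [splitVars_eq_aeval]
  refine mem_totalDegreeFiltration.1 (IsDegreeFiltration.aeval_mem
    (totalDegreeFiltration τ (MvPolynomial υ k)) (fun a => ?_) (fun i => ?_) p) <;>
    rw [mem_totalDegreeFiltration]
  · exact (totalDegree_C (C a : MvPolynomial υ k)).le
  · rcases ε.symm i with j | u <;> simp [totalDegree_X_le]

lemma splitVars_mem_coeffFiltration (p : MvPolynomial σ k) :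
    splitVars ε p ∈ coeffFiltration τ (totalDegreeFiltration υ k) p.totalDegree := by
  rw [splitVars_eq_aeval]
  refine IsDegreeFiltration.aeval_mem _ (fun a => ?_) (fun i => ?_) p
  · exact monomial_mem_coeffFiltration 0 (mem_totalDegreeFiltration.2 (totalDegree_C a).le)
  · rcases ε.symm i with j | u
    · exact monomial_mem_coeffFiltration _ 
        (mem_totalDegreeFiltration.2 (totalDegree_one.trans_le zero_le_one))
    · exact monomial_mem_coeffFiltration 0 (mem_totalDegreeFiltration.2 (totalDegree_X_le u))

lemma totalDegree_splitVars_symm_le {p : MvPolynomial τ (MvPolynomial υ k)} {a b : ℕ}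
    (ha : p.totalDegree ≤ a) (hb : p ∈ coeffFiltration τ (totalDegreeFiltration υ k) b) :
    ((splitVars ε).symm p).totalDegree ≤ b + a := by
  conv_lhs => rw [p.as_sum, map_sum]
  refine totalDegree_finsetSum_le fun γ hγ => ?_
  have hmonomial : (splitVars ε).symm (monomial γ (p.coeff γ)) =
      rename (ε ∘ .inr) (p.coeff γ) * monomial (γ.mapDomain (ε ∘ .inl)) 1 := by
    rw [monomial_eq, map_mul, splitVars_symm_C, ← rename_monomial, monomial_eq, map_one, one_mul]
    simp only [Finsupp.prod, map_prod, map_pow, splitVars_symm_X, rename_X, Function.comp_apply]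
  rw [hmonomial]
  refine (totalDegree_mul _ _).trans (add_le_add ?_ ?_)
  · exact (totalDegree_rename_le _ _).trans
      (mem_totalDegreeFiltration.1 (mem_coeffFiltration.1 hb γ))
  · refine (totalDegree_monomial_le _ _).trans ?_
    exact (Finsupp.degree_mapDomain _ γ).trans_le ((le_totalDegree hγ).trans ha)

variable {S : Type*} [CommRing S] [Algebra k S] [Algebra (MvPolynomial υ k) S]
  [IsScalarTower k (MvPolynomial υ k) S] {x : σ → S}

lemma aeval_splitVars (hx : ∀ u, algebraMap (MvPolynomial υ k) S (X u) = x (ε (.inr u)))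
    (p : MvPolynomial σ k) : aeval (x ∘ ε ∘ .inl) (splitVars ε p) = aeval x p := by
  have h : ((aeval (x ∘ ε ∘ .inl) :
      MvPolynomial τ (MvPolynomial υ k) →ₐ[MvPolynomial υ k] S).restrictScalars k).comp
        (splitVars ε).toAlgHom = aeval x := by
    ext i : 1
    obtain ⟨j | u, rfl⟩ := ε.surjective i <;> simp [splitVars_X, hx]
  exact DFunLike.congr_fun h p

lemma ker_aeval_comp_inl (hx : ∀ u, algebraMap (MvPolynomial υ k) S (X u) = x (ε (.inr u)))
    {ι : Type*} {f : ι → MvPolynomial σ k}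
    (hf : RingHom.ker (aeval x : MvPolynomial σ k →ₐ[k] S) = Ideal.span (Set.range f)) :
    RingHom.ker (aeval (x ∘ ε ∘ .inl) : MvPolynomial τ (MvPolynomial υ k) →ₐ[MvPolynomial υ k] S) =
      Ideal.span (Set.range (splitVars ε ∘ f)) := by
  rw [Set.range_comp, ← Ideal.map_span, ← hf]
  ext p
  obtain ⟨p, rfl⟩ := (splitVars ε).surjective p
  rw [RingHom.mem_ker, aeval_splitVars ε hx, Ideal.mem_map_of_equiv]
  simp

end SplitVars

section AlgebraicDependence

open MvPolynomial

lemma relationBound_mono {m n e : ℕ} (h : m ≤ n) (he : 1 ≤ e) (d : ℕ) :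
    relationBound m e d ≤ relationBound n e d := by
  have hpow : (3 * e) ^ 2 ^ m ≤ (3 * e) ^ 2 ^ n :=
    Nat.pow_le_pow_right (by omega) (Nat.pow_le_pow_right two_pos h)
  refine Nat.mul_le_mul_right d ?_
  calc ((3 * e) ^ 2 ^ m + e + 1) ^ m ≤ ((3 * e) ^ 2 ^ n + e + 1) ^ m := by gcongr
    _ ≤ ((3 * e) ^ 2 ^ n + e + 1) ^ n := Nat.pow_le_pow_right (Nat.succ_pos _) h

lemma exists_sum_equiv_of_injective {σ υ : Type*} [Fintype σ] {g : υ → σ}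
    (hg : Function.Injective g) :
    ∃ m ≤ Fintype.card σ, ∃ ε : Fin m ⊕ υ ≃ σ, ∀ u, ε (.inr u) = g u := by
  classical
  refine ⟨Fintype.card ↥(Set.range g)ᶜ, set_fintype_card_le_univ _,
    ((Fintype.equivFin _).symm.sumCongr (.ofInjective g hg)).trans <|
      (Equiv.sumComm _ _).trans (Equiv.Set.sumCompl (Set.range g)), fun u => by simp⟩

variable {k S : Type*} [Field k] [CommRing S] [Algebra k S]

lemma exists_totalDegree_le_aeval_eq_zero [Infinite k] {σ υ ι : Type*} [Fintype σ] [Finite ι]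
    {f : ι → MvPolynomial σ k} {d : ℕ} (hd : 1 ≤ d) (hf : ∀ i, (f i).totalDegree ≤ d) {x : σ → S}
    (hker : RingHom.ker (aeval x : MvPolynomial σ k →ₐ[k] S) = Ideal.span (Set.range f))
    {g : υ → σ} (hg : Function.Injective g) (hx : ¬ AlgebraicIndependent k (x ∘ g)) :
    ∃ q : MvPolynomial υ k, q ≠ 0 ∧ q.totalDegree ≤ relationBound (Fintype.card σ) d d ∧
      aeval (x ∘ g) q = 0 := by
  obtain ⟨m, hm, ε, hε⟩ := exists_sum_equiv_of_injective hg
  let := (aeval (x ∘ g) : MvPolynomial υ k →ₐ[k] S).toAlgebra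
  have : IsScalarTower k (MvPolynomial υ k) S := .of_algHom (aeval (x ∘ g))
  have hmem (c : MvPolynomial υ k) :
      c • 1 ∈ Ideal.span (Set.range (splitVars ε ∘ f)) ↔ aeval (x ∘ g) c = 0 := by
    have halg (u : υ) : algebraMap (MvPolynomial υ k) S (X u) = x (ε (.inr u)) := by
      rw [hε]
      exact aeval_X _ u
    rw [← ker_aeval_comp_inl ε halg hker, RingHom.mem_ker, map_smul, map_one,
      ← Algebra.algebraMap_eq_smul_one]
    rfl
  rw [algebraicIndependent_iff] at hx
  push Not at hx
  obtain ⟨c, hc, hc0⟩ := hx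
  obtain ⟨q, _, hq0, hqF, -, hq⟩ := exists_smul_sub_sum_smul_mem_of_mem
    (totalDegreeFiltration υ k) hd (f := splitVars ε ∘ f)
    (fun i => (totalDegree_splitVars_le ε _).trans (hf i))
    (fun i => IsDegreeFiltration.mem_of_le _ (hf i) (splitVars_mem_coeffFiltration ε (f i)))
    (w := 1) (by simp) (IsDegreeFiltration.mem_of_le _ d.zero_le (SetLike.one_mem_graded _))
    (κ := Empty) (v := Empty.elim) (by simp) (by simp) hc0 (b := Empty.elim)
    (by simpa only [Finset.univ_eq_empty, Finset.sum_empty, sub_zero] using (hmem c).2 hc)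
  exact ⟨q, hq0, (mem_totalDegreeFiltration.1 hqF).trans (relationBound_mono hm hd d),
    (hmem q).1 (by simpa only [Finset.univ_eq_empty, Finset.sum_empty, sub_zero] using hq)⟩

lemma aeval_optionEquivLeft {υ : Type*} [Algebra (MvPolynomial υ k) S]
    [IsScalarTower k (MvPolynomial υ k) S] {y : Option υ → S}
    (hy : ∀ u, algebraMap (MvPolynomial υ k) S (X u) = y (some u)) (q : MvPolynomial (Option υ) k) :
    Polynomial.aeval (y none) (optionEquivLeft k υ q) = aeval y q := by
  have h : ((Polynomial.aeval (R := MvPolynomial υ k) (y none)).restrictScalars k).comp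
      (optionEquivLeft k υ).toAlgHom = aeval y := by
    ext (- | u) : 1 <;> simp [optionEquivLeft_X_none, optionEquivLeft_X_some, hy]
  exact DFunLike.congr_fun h q

lemma exists_natDegree_le_aeval_eq_zero [Infinite k] {σ ι : Type*} [Fintype σ] [Finite ι]
    {f : ι → MvPolynomial σ k} {d : ℕ} (hd : 1 ≤ d) (hf : ∀ i, (f i).totalDegree ≤ d) {x : σ → S}
    (hker : RingHom.ker (aeval x : MvPolynomial σ k →ₐ[k] S) = Ideal.span (Set.range f))
    {U : Set σ} {j : σ} (hj : j ∉ U) (hx : ¬ AlgebraicIndepOn k x (insert j U))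
    [Algebra (MvPolynomial U k) S] [IsScalarTower k (MvPolynomial U k) S]
    (hU : ∀ u, algebraMap (MvPolynomial U k) S (X u) = x u) :
    ∃ q : Polynomial (MvPolynomial U k), q ≠ 0 ∧
      q.natDegree ≤ relationBound (Fintype.card σ) d d ∧ Polynomial.aeval (x j) q = 0 := by
  classical
  let g : Option U → σ := fun o => o.elim j (↑)
  have hg : Function.Injective g :=
    Option.injective_iff.2 ⟨Subtype.val_injective, fun ⟨u, (hu : (u : σ) = j)⟩ => hj (hu ▸ u.2)⟩
  have hxg : ¬ AlgebraicIndependent k (x ∘ g) := fun h => hx <|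
    (algebraicIndependent_equiv' (Set.subtypeInsertEquivOption hj).symm
      (funext <| by rintro (- | u) <;> rfl)).1 h
  obtain ⟨q, hq, hqd, hq0⟩ := exists_totalDegree_le_aeval_eq_zero hd hf hker hg hxg
  refine ⟨optionEquivLeft k U q, (map_ne_zero_iff _ (optionEquivLeft k U).injective).2 hq, ?_, ?_⟩
  · rw [natDegree_optionEquivLeft]
    exact (degreeOf_le_totalDegree _ _).trans hqd
  · exact (aeval_optionEquivLeft (y := x ∘ g) hU q).trans hq0

lemma exists_algebraicIndepOn_forall_not_insert {σ : Type*} [Finite σ] [Nontrivial S] (x : σ → S) :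
    ∃ U : Set σ, AlgebraicIndepOn k x U ∧
      ∀ j ∉ U, ¬ AlgebraicIndepOn k x (insert j U) := by
  obtain ⟨U, -, hU⟩ := (Set.toFinite {U : Set σ | AlgebraicIndepOn k x U}).exists_le_maximal
    (a := ∅) (algebraicIndependent_empty_type_iff.2 (algebraMap k S).injective)
  exact ⟨U, hU.prop, fun j hj h => hj (hU.le_of_ge h (Set.subset_insert j U) (Set.mem_insert j U))⟩

end AlgebraicDependence

section InfiniteField

open MvPolynomial nonZeroDivisors

lemma le_relationBound (m e d : ℕ) : d ≤ relationBound m e d :=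
  Nat.le_mul_of_pos_left d (by positivity)

lemma le_structureBound (m E d : ℕ) : d ≤ structureBound m E d :=
  (le_relationBound m E d).trans (Nat.le_mul_of_pos_left _ (by positivity))

lemma structureBound_mono {m n E : ℕ} (h : m ≤ n) (hE : 1 ≤ E) (d : ℕ) :
    structureBound m E d ≤ structureBound n E d :=
  Nat.mul_le_mul (Nat.pow_le_pow_right E.succ_pos h) (relationBound_mono h hE d)

variable {k S ι : Type*} [Field k] [Infinite k] [CommRing S] [Algebra k S] [Finite ι] {n d : ℕ}
  {f : ι → MvPolynomial (Fin n) k} {x : Fin n → S}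

lemma IsPrimeUpTo.aeval_mem_nonZeroDivisors {b : ℕ}
    (h : IsPrimeUpTo (Ideal.span (Set.range f)) b) (hd : 1 ≤ d) (hf : ∀ i, (f i).totalDegree ≤ d)
    (hb : (3 * d) ^ 2 ^ n ≤ b)
    (hx : Function.Surjective (aeval x : MvPolynomial (Fin n) k →ₐ[k] S))
    (hker : RingHom.ker (aeval x : MvPolynomial (Fin n) k →ₐ[k] S) = Ideal.span (Set.range f))
    {u : MvPolynomial (Fin n) k} (hu : u.totalDegree ≤ d) (hu0 : aeval x u ≠ 0) :
    aeval x u ∈ S⁰ := by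
  have hmem (p : MvPolynomial (Fin n) k) : aeval x p = 0 ↔ p ∈ Ideal.span (Set.range f) := by
    rw [← hker, RingHom.mem_ker]
  refine mem_nonZeroDivisors_iff_left.2 fun s hs => ?_
  obtain ⟨v, rfl⟩ := hx s
  rw [← map_mul, hmem] at hs
  exact (hmem v).2 (h.mem_of_mul_mem hd hf hb hu (mt (hmem u).2 hu0) hs)

theorem IsPrimeUpTo.isDomain [Nontrivial S] {e E B b : ℕ}
    (h : IsPrimeUpTo (Ideal.span (Set.range f)) b) (hd : 1 ≤ d) (hf : ∀ i, (f i).totalDegree ≤ d)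
    (hx : Function.Surjective (aeval x : MvPolynomial (Fin n) k →ₐ[k] S))
    (hker : RingHom.ker (aeval x : MvPolynomial (Fin n) k →ₐ[k] S) = Ideal.span (Set.range f))
    (he : relationBound n d d ≤ e) (hE : 2 * (n * e) + d + 1 ≤ E)
    (hB₁ : structureBound n E d ≤ B) (hB₂ : n * e ^ n * (e ^ n * structureBound n E d) ≤ B)
    (hb : (3 * (B + n * e)) ^ 2 ^ n ≤ b) : IsDomain S := by
  classical
  obtain ⟨U, hU, hUmax⟩ := exists_algebraicIndepOn_forall_not_insert (k := k) x
  obtain ⟨m, hm, ε, hε⟩ := exists_sum_equiv_of_injective (Subtype.val_injective (p := (· ∈ U)))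
  rw [Fintype.card_fin] at hm
  let := (aeval fun u : U => x u : MvPolynomial U k →ₐ[k] S).toAlgebra
  have : IsScalarTower k (MvPolynomial U k) S := .of_algHom (aeval fun u : U => x u)
  have hxU (u : U) : algebraMap (MvPolynomial U k) S (X u) = x u := aeval_X _ u
  have hxε (u : U) : algebraMap (MvPolynomial U k) S (X u) = x (ε (.inr u)) := by rw [hxU, hε]
  have he1 : 1 ≤ e := hd.trans ((le_relationBound n d d).trans he)
  have hme : m * e ≤ n * e := Nat.mul_le_mul_right e hm
  have hH : structureBound m E d ≤ structureBound n E d := structureBound_mono hm (by omega) d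
  have hdB : d ≤ B := (le_structureBound n E d).trans hB₁
  refine isDomain_of_forall_mem_nonZeroDivisors_of_totalDegree_le (e := e) (E := E) (d := d)
    (B := B) (f := splitVars ε ∘ f) (ψ := aeval (x ∘ ε ∘ .inl)) (by omega) (fun s => ?_)
    (ker_aeval_comp_inl ε hxε hker)
    (fun i => (totalDegree_splitVars_le ε _).trans ((hf i).trans (by omega)))
    (fun i => IsDegreeFiltration.mem_of_le _ (hf i) (splitVars_mem_coeffFiltration ε (f i)))
    hU (fun j => ?_) (hH.trans hB₁) (le_trans ?_ hB₂) fun g hg hgB hg0 => ?_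
  · obtain ⟨p, rfl⟩ := hx s
    exact ⟨splitVars ε p, aeval_splitVars ε hxε p⟩
  · have hj : ε (.inl j) ∉ U := fun hjU => by
      simpa using ε.injective (hε ⟨_, hjU⟩)
    obtain ⟨q, hq, hqd, hq0⟩ := exists_natDegree_le_aeval_eq_zero hd hf hker hj (hUmax _ hj) hxU
    rw [Fintype.card_fin] at hqd
    exact ⟨q, hq, hqd.trans he, by rwa [aeval_X]⟩
  · have hcard : Fintype.card U ≤ n := (set_fintype_card_le_univ U).trans_eq (Fintype.card_fin n)
    have hem : e ^ m ≤ e ^ n := Nat.pow_le_pow_right he1 hm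
    gcongr
  · have hψ := aeval_splitVars ε hxε ((splitVars ε).symm g)
    rw [AlgEquiv.apply_symm_apply] at hψ
    rw [hψ] at hg0 ⊢
    exact h.aeval_mem_nonZeroDivisors (d := B + n * e) (by omega)
      (fun i => (hf i).trans (by omega)) hb hx hker
      ((totalDegree_splitVars_symm_le ε hg hgB).trans (by omega)) hg0

lemma IsPrimeUpTo.isPrime_of_infinite {e E B b : ℕ}
    (h : IsPrimeUpTo (Ideal.span (Set.range f)) b) (hd : 1 ≤ d) (hf : ∀ i, (f i).totalDegree ≤ d)
    (hI : Ideal.span (Set.range f) ≠ ⊤)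
    (he : relationBound n d d ≤ e) (hE : 2 * (n * e) + d + 1 ≤ E)
    (hB₁ : structureBound n E d ≤ B) (hB₂ : n * e ^ n * (e ^ n * structureBound n E d) ≤ B)
    (hb : (3 * (B + n * e)) ^ 2 ^ n ≤ b) : (Ideal.span (Set.range f)).IsPrime := by
  have := Ideal.Quotient.nontrivial_iff.2 hI
  have hmk : aeval (fun i => Ideal.Quotient.mk (Ideal.span (Set.range f)) (X i)) =
      Ideal.Quotient.mkₐ k (Ideal.span (Set.range f)) :=
    algHom_ext fun i => aeval_X _ i
  refine (Ideal.Quotient.isDomain_iff_prime _).1 (h.isDomain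
    (x := fun i => Ideal.Quotient.mk _ (X i)) hd hf ?_ ?_ he hE hB₁ hB₂ hb)
  · rw [hmk]
    exact Ideal.Quotient.mkₐ_surjective k _
  · rw [hmk]
    exact Ideal.Quotient.mkₐ_ker k _

end InfiniteField

section Bounds

variable {X n m d e a : ℕ}

lemma mul_pow_le_pow {c r b : ℕ} (hX : 1 ≤ X) (hc : c ≤ X ^ r) (h : r + a ≤ b) :
    c * X ^ a ≤ X ^ b := calc
  c * X ^ a ≤ X ^ r * X ^ a := by gcongr
  _ = X ^ (r + a) := (pow_add ..).symm
  _ ≤ X ^ b := Nat.pow_le_pow_right hX h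

lemma relationBound_le_pow (hX : 2 ≤ X) (he : 1 ≤ e) (hea : 3 * e ≤ X ^ a) (hd : d ≤ X) :
    relationBound m e d ≤ X ^ ((a * 2 ^ m + 1) * m + 1) := by
  have hself : 3 * e ≤ (3 * e) ^ 2 ^ m := Nat.le_self_pow (by positivity) _
  have hbase : (3 * e) ^ 2 ^ m + e + 1 ≤ X ^ (a * 2 ^ m + 1) := calc
    (3 * e) ^ 2 ^ m + e + 1 ≤ (3 * e) ^ 2 ^ m * 2 := by lia
    _ ≤ (X ^ a) ^ 2 ^ m * X := by gcongr
    _ = X ^ (a * 2 ^ m + 1) := by rw [pow_succ, pow_mul]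
  rw [pow_succ, pow_mul]
  exact Nat.mul_le_mul (Nat.pow_le_pow_left hbase m) hd

lemma structureBound_le_pow (hX : 2 ≤ X) (he : 1 ≤ e) (hea : 3 * e ≤ X ^ a) (hd : d ≤ X) :
    structureBound m e d ≤ X ^ (a * m + ((a * 2 ^ m + 1) * m + 1)) := by
  rw [pow_add, pow_mul]
  exact Nat.mul_le_mul (Nat.pow_le_pow_left (by lia) m) (relationBound_le_pow hX he hea hd)

lemma two_mul_le_mul_two_pow (hn : 1 ≤ n) : 2 * n ≤ n * 2 ^ n := by
  rw [mul_comm 2]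
  exact Nat.mul_le_mul_left n (Nat.le_self_pow (by lia) 2)

lemma relationBound_self_le (hX : 2 ≤ X) (hn : 1 ≤ n) (hd : 1 ≤ d) (hdX : 2 * d ≤ X) :
    relationBound n d d ≤ X ^ (3 * (n * 2 ^ n)) := by
  have hnN := two_mul_le_mul_two_pow hn
  refine (relationBound_le_pow (a := 2) hX hd (by nlinarith) (by lia)).trans
    (Nat.pow_le_pow_right (by lia) ?_)
  lia

lemma structureBound_pow_le (hX : 2 ≤ X) (hn : 1 ≤ n) (hdX : d ≤ X) :
    structureBound n (X ^ (4 * (n * 2 ^ n))) d ≤ X ^ (8 * (n * 2 ^ n) ^ 2) := by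
  have hnN := two_mul_le_mul_two_pow hn
  refine (structureBound_le_pow (a := 5 * (n * 2 ^ n)) hX (Nat.one_le_pow _ _ (by lia))
    (mul_pow_le_pow (r := 2) (by lia) (by nlinarith) (by lia)) hdX).trans
    (Nat.pow_le_pow_right (by lia) ?_)
  rw [show (5 * (n * 2 ^ n) * 2 ^ n + 1) * n + 1 = 5 * (n * 2 ^ n) ^ 2 + (n + 1) by ring]
  nlinarith

lemma three_mul_pow_add_pow_le (hX : 2 ≤ X) (hn : 1 ≤ n) (hnX : n ≤ X) :
    (3 * (X ^ (12 * (n * 2 ^ n) ^ 2) + n * X ^ (3 * (n * 2 ^ n)))) ^ 2 ^ n ≤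
      X ^ (n * (n + 1) ^ 2 * 2 ^ (4 * n + 6)) := by
  have hnN := two_mul_le_mul_two_pow hn
  have hsum : 3 * (X ^ (12 * (n * 2 ^ n) ^ 2) + n * X ^ (3 * (n * 2 ^ n))) ≤
      X ^ (13 * (n * 2 ^ n) ^ 2) := calc
    _ ≤ 3 * (X ^ (12 * (n * 2 ^ n) ^ 2) + X ^ (12 * (n * 2 ^ n) ^ 2)) := by
      gcongr
      exact mul_pow_le_pow (r := 1) (by lia) (by lia) (by nlinarith)
    _ = 6 * X ^ (12 * (n * 2 ^ n) ^ 2) := by ring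
    _ ≤ X ^ (13 * (n * 2 ^ n) ^ 2) :=
      mul_pow_le_pow (r := 3) (by lia) (by nlinarith [Nat.pow_le_pow_left hX 3]) (by nlinarith)
  calc _ ≤ (X ^ (13 * (n * 2 ^ n) ^ 2)) ^ 2 ^ n := Nat.pow_le_pow_left hsum _
    _ = X ^ (13 * (n ^ 2 * 2 ^ (3 * n))) := by rw [← pow_mul]; ring
    _ ≤ X ^ (64 * (n * (n + 1) ^ 2 * 2 ^ (4 * n))) := by gcongr <;> nlinarith
    _ = X ^ (n * (n + 1) ^ 2 * 2 ^ (4 * n + 6)) := by ring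

end Bounds

section InfiniteField

variable {k ι : Type*} [Field k] [Infinite k] [Finite ι] {n d : ℕ} {f : ι → MvPolynomial (Fin n) k}

/-- With `X = 2 * n * d` and `N = n * 2 ^ n`, the conditions of `IsPrimeUpTo.isPrime_of_infinite`
are met by `e = X ^ (3 * N)`, `E = X ^ (4 * N)` and `B = X ^ (12 * N ^ 2)`. -/
theorem IsPrimeUpTo.isPrime_of_infinite_of_pow (hn : 1 ≤ n) (hd : 1 ≤ d)
    (h : IsPrimeUpTo (Ideal.span (Set.range f))
      ((2 * n * d) ^ (n * (n + 1) ^ 2 * 2 ^ (4 * n + 6))))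
    (hf : ∀ i, (f i).totalDegree ≤ d) (hI : Ideal.span (Set.range f) ≠ ⊤) :
    (Ideal.span (Set.range f)).IsPrime := by
  obtain ⟨X, hX⟩ : ∃ X, X = 2 * n * d := ⟨_, rfl⟩
  obtain ⟨N, hN⟩ : ∃ N, N = n * 2 ^ n := ⟨_, rfl⟩
  have hnN : 2 * n ≤ N := hN ▸ two_mul_le_mul_two_pow hn
  have hdX : 2 * d ≤ X := by rw [hX]; nlinarith
  have hnX : 2 * n ≤ X := by rw [hX]; nlinarith
  have hS : structureBound n (X ^ (4 * N)) d ≤ X ^ (8 * N ^ 2) :=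
    hN ▸ structureBound_pow_le (by lia) hn (by lia)
  refine h.isPrime_of_infinite (e := X ^ (3 * N)) (E := X ^ (4 * N)) (B := X ^ (12 * N ^ 2))
    hd hf hI (hN ▸ relationBound_self_le (by lia) hn hd hdX) ?_
    (hS.trans (Nat.pow_le_pow_right (by lia) (by lia))) ?_
    (hX ▸ hN ▸ three_mul_pow_add_pow_le (by lia) hn (by lia))
  · have hXe : 1 ≤ X ^ (3 * N) := Nat.one_le_pow _ _ (by lia)
    calc 2 * (n * X ^ (3 * N)) + d + 1 = 2 * n * X ^ (3 * N) + (d + 1) * 1 := by ring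
      _ ≤ X * X ^ (3 * N) + X * X ^ (3 * N) := by gcongr; lia
      _ = 2 * X * X ^ (3 * N) := by ring
      _ ≤ X ^ (4 * N) := mul_pow_le_pow (r := 2) (by lia) (by nlinarith) (by lia)
  · calc n * (X ^ (3 * N)) ^ n * ((X ^ (3 * N)) ^ n * structureBound n (X ^ (4 * N)) d)
        ≤ X * (X ^ (3 * N)) ^ n * ((X ^ (3 * N)) ^ n * X ^ (8 * N ^ 2)) := by gcongr; lia
      _ = X ^ (1 + 6 * N * n + 8 * N ^ 2) := by ring
      _ ≤ X ^ (12 * N ^ 2) := Nat.pow_le_pow_right (by lia) (by nlinarith)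

end InfiniteField

section FractionField

open nonZeroDivisors

attribute [local instance] MvPolynomial.algebraMvPolynomial

variable {A K τ : Type*} [CommRing A] [CommRing K] [Algebra A K] [IsFractionRing A K]

lemma map_mem_map_iff_exists_C_mul_mem (I : Ideal (MvPolynomial τ A)) (f : MvPolynomial τ A) :
    MvPolynomial.map (algebraMap A K) f ∈ I.map (MvPolynomial.map (algebraMap A K)) ↔
      ∃ c ∈ A⁰, MvPolynomial.C c * f ∈ I := by
  rw [← MvPolynomial.algebraMap_def,
    IsLocalization.algebraMap_mem_map_algebraMap_iff (A⁰.map (MvPolynomial.C (σ := τ)))]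
  simp only [Submonoid.mem_map, exists_exists_and_eq_and]

lemma map_mem_map_iff {I : Ideal (MvPolynomial τ A)}
    (hI : ∀ c ∈ A⁰, ∀ f, MvPolynomial.C c * f ∈ I → f ∈ I) (f : MvPolynomial τ A) :
    MvPolynomial.map (algebraMap A K) f ∈ I.map (MvPolynomial.map (algebraMap A K)) ↔ f ∈ I := by
  refine ⟨fun h => ?_, Ideal.mem_map_of_mem _⟩
  obtain ⟨c, hc, hcf⟩ := (map_mem_map_iff_exists_C_mul_mem I f).1 h
  exact hI c hc f hcf

lemma exists_associated_map (z : MvPolynomial τ K) : ∃ f : MvPolynomial τ A,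
    f.totalDegree ≤ z.totalDegree ∧ Associated z (MvPolynomial.map (algebraMap A K) f) := by
  obtain ⟨⟨f, ⟨_, c, hc, rfl⟩⟩, h⟩ := IsLocalization.surj (A⁰.map (MvPolynomial.C (σ := τ))) z
  rw [MvPolynomial.algebraMap_def, MvPolynomial.map_C] at h
  refine ⟨f, ?_, ?_⟩
  · rw [← totalDegree_map_of_injective (IsFractionRing.injective A K), ← h]
    exact (MvPolynomial.totalDegree_mul _ _).trans (by rw [MvPolynomial.totalDegree_C, add_zero])
  · have hunit : IsUnit (algebraMap A K c) := IsLocalization.map_units K (⟨c, hc⟩ : A⁰)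
    exact ⟨(hunit.map MvPolynomial.C).unit, h⟩

lemma IsPrimeUpTo.map_algebraMap {I : Ideal (MvPolynomial τ A)} {b : ℕ} (h : IsPrimeUpTo I b)
    (hI : ∀ c ∈ A⁰, ∀ f, MvPolynomial.C c * f ∈ I → f ∈ I) :
    IsPrimeUpTo (I.map (MvPolynomial.map (algebraMap A K))) b := fun u v hu hv huv => by
  obtain ⟨f, hf, huf⟩ := exists_associated_map (A := A) u
  obtain ⟨g, hg, hvg⟩ := exists_associated_map (A := A) v
  rw [Ideal.mem_iff_of_associated (huf.mul_mul hvg), ← map_mul, map_mem_map_iff hI] at huv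
  rw [Ideal.mem_iff_of_associated huf, Ideal.mem_iff_of_associated hvg, map_mem_map_iff hI,
    map_mem_map_iff hI]
  exact h f g (hf.trans hu) (hg.trans hv) huv

end FractionField

section Transcendental

open Polynomial nonZeroDivisors

/-- The identification of `R[t][x]` with `R[x][t]`. -/
noncomputable def swapVars (τ R : Type*) [CommRing R] :
    MvPolynomial τ R[X] ≃+* (MvPolynomial τ R)[X] :=
  .ofRingHom
    (MvPolynomial.eval₂Hom (mapRingHom MvPolynomial.C) fun i => C (MvPolynomial.X i))
    (eval₂RingHom (MvPolynomial.map C) (MvPolynomial.C X))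
    (ringHom_ext' (by ext <;> simp) (by simp))
    (MvPolynomial.ringHom_ext' (by ext <;> simp) (by simp))

variable {τ R : Type*} [CommRing R]

lemma swapVars_C (c : R[X]) : swapVars τ R (MvPolynomial.C c) = c.map MvPolynomial.C :=
  MvPolynomial.eval₂Hom_C ..

lemma swapVars_symm_C (f : MvPolynomial τ R) : (swapVars τ R).symm (C f) = MvPolynomial.map C f :=
  eval₂_C ..

lemma coeff_coeff_swapVars (P : MvPolynomial τ R[X]) (t : ℕ) (γ : τ →₀ ℕ) :
    ((swapVars τ R P).coeff t).coeff γ = (P.coeff γ).coeff t := by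
  classical
  induction P using MvPolynomial.induction_on' with
  | monomial m c =>
    have hm : swapVars τ R (MvPolynomial.monomial m c) =
        c.map MvPolynomial.C * C (MvPolynomial.monomial m 1) := by
      refine (MvPolynomial.eval₂Hom_monomial ..).trans ?_
      simp [MvPolynomial.monomial_eq (a := (1 : R)), Finsupp.prod,
        -MvPolynomial.prod_X_pow_eq_monomial]
    rw [hm, coeff_mul_C, coeff_map, MvPolynomial.C_mul_monomial, mul_one,
      MvPolynomial.coeff_monomial, MvPolynomial.coeff_monomial]
    split_ifs <;> simp
  | add P Q hP hQ => simp only [map_add, coeff_add, MvPolynomial.coeff_add, hP, hQ]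

lemma totalDegree_coeff_swapVars_le (P : MvPolynomial τ R[X]) (t : ℕ) :
    ((swapVars τ R P).coeff t).totalDegree ≤ P.totalDegree :=
  Finset.sup_mono fun γ => by
    simp only [MvPolynomial.mem_support_iff, coeff_coeff_swapVars]
    exact mt fun h => by rw [h, coeff_zero]

/-- The reduction of the coefficients with respect to `t` modulo an ideal of `R[x]`. -/
noncomputable def reduceCoeffs (I : Ideal (MvPolynomial τ R)) :
    MvPolynomial τ R[X] →+* (MvPolynomial τ R ⧸ I)[X] :=
  (mapRingHom (Ideal.Quotient.mk I)).comp (swapVars τ R)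

lemma coeff_reduceCoeffs (I : Ideal (MvPolynomial τ R)) (P : MvPolynomial τ R[X]) (t : ℕ) :
    (reduceCoeffs I P).coeff t = Ideal.Quotient.mk I ((swapVars τ R P).coeff t) :=
  coeff_map ..

lemma reduceCoeffs_C (I : Ideal (MvPolynomial τ R)) (c : R[X]) :
    reduceCoeffs I (MvPolynomial.C c) = c.map ((Ideal.Quotient.mk I).comp MvPolynomial.C) := by
  rw [reduceCoeffs, RingHom.comp_apply, RingHom.coe_coe, swapVars_C, coe_mapRingHom, map_map]

lemma mem_map_map_C_iff {I : Ideal (MvPolynomial τ R)} {P : MvPolynomial τ R[X]} :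
    P ∈ I.map (MvPolynomial.map C) ↔ reduceCoeffs I P = 0 := by
  have hcomp : ((swapVars τ R).symm : (MvPolynomial τ R)[X] →+* _).comp C = MvPolynomial.map C :=
    RingHom.ext fun f => swapVars_symm_C f
  rw [← hcomp, ← Ideal.map_map, Ideal.map_coe, Ideal.map_symm, Ideal.mem_comap, Ideal.mem_map_C_iff,
    Polynomial.ext_iff]
  simp only [coeff_reduceCoeffs, coeff_zero, Ideal.Quotient.eq_zero_iff_mem]

lemma map_C_mem_map_map_C_iff {I : Ideal (MvPolynomial τ R)} {f : MvPolynomial τ R} :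
    MvPolynomial.map C f ∈ I.map (MvPolynomial.map (C : R →+* R[X])) ↔ f ∈ I := by
  rw [mem_map_map_C_iff, ← swapVars_symm_C, reduceCoeffs, RingHom.comp_apply, RingHom.coe_coe,
    RingEquiv.apply_symm_apply, coe_mapRingHom, map_C, C_eq_zero, Ideal.Quotient.eq_zero_iff_mem]

lemma IsPrimeUpTo.map_map_C {I : Ideal (MvPolynomial τ R)} {b : ℕ} (h : IsPrimeUpTo I b) :
    IsPrimeUpTo (I.map (MvPolynomial.map (C : R →+* R[X]))) b := fun P Q hP hQ hPQ => by
  rw [mem_map_map_C_iff, map_mul] at hPQ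
  have hlead := coeff_mul_degree_add_degree (reduceCoeffs I P) (reduceCoeffs I Q)
  rw [hPQ, coeff_zero, leadingCoeff, leadingCoeff, coeff_reduceCoeffs, coeff_reduceCoeffs,
    ← map_mul, eq_comm, Ideal.Quotient.eq_zero_iff_mem] at hlead
  rw [mem_map_map_C_iff, mem_map_map_C_iff, ← leadingCoeff_eq_zero, ← leadingCoeff_eq_zero,
    leadingCoeff, leadingCoeff, coeff_reduceCoeffs, coeff_reduceCoeffs,
    Ideal.Quotient.eq_zero_iff_mem, Ideal.Quotient.eq_zero_iff_mem]
  exact h _ _ ((totalDegree_coeff_swapVars_le P _).trans hP)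
    ((totalDegree_coeff_swapVars_le Q _).trans hQ) hlead

lemma mem_map_map_C_of_C_mul_mem {k : Type*} [Field k] {I : Ideal (MvPolynomial τ k)} {c : k[X]}
    (hc : c ≠ 0) {P : MvPolynomial τ k[X]}
    (h : MvPolynomial.C c * P ∈ I.map (MvPolynomial.map C)) : P ∈ I.map (MvPolynomial.map C) := by
  obtain rfl | hI := eq_or_ne I ⊤
  · rw [Ideal.map_top]
    exact Submodule.mem_top
  have := Ideal.Quotient.nontrivial_iff.2 hI
  rw [mem_map_map_C_iff, map_mul, reduceCoeffs_C] at h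
  rw [mem_map_map_C_iff]
  refine (isUnit_leadingCoeff_mul_right_eq_zero_iff ?_).1 h
  rw [leadingCoeff_map]
  exact (isUnit_iff_ne_zero.2 (leadingCoeff_ne_zero.2 hc)).map _

section RatFunc

lemma map_map_comp {A B K : Type*} [CommSemiring A] [CommSemiring B] [CommSemiring K] (φ : A →+* B)
    (ψ : B →+* K) (I : Ideal (MvPolynomial τ A)) :
    I.map (MvPolynomial.map (ψ.comp φ)) =
      (I.map (MvPolynomial.map φ)).map (MvPolynomial.map ψ) := by
  rw [Ideal.map_map]
  congr 1
  exact RingHom.ext fun f => (MvPolynomial.map_map φ ψ f).symm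

variable {k K : Type*} [Field k] [CommRing K] [Algebra k[X] K] [IsFractionRing k[X] K]

lemma IsPrimeUpTo.map_algebraMap_comp_C {I : Ideal (MvPolynomial τ k)} {b : ℕ}
    (h : IsPrimeUpTo I b) :
    IsPrimeUpTo (I.map (MvPolynomial.map ((algebraMap k[X] K).comp C))) b := by
  rw [map_map_comp]
  exact h.map_map_C.map_algebraMap fun c hc f =>
    mem_map_map_C_of_C_mul_mem (nonZeroDivisors.ne_zero hc)

lemma comap_map_algebraMap_comp_C (I : Ideal (MvPolynomial τ k)) :
    (I.map (MvPolynomial.map ((algebraMap k[X] K).comp C))).comap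
      (MvPolynomial.map ((algebraMap k[X] K).comp C)) = I := by
  ext f
  rw [Ideal.mem_comap, map_map_comp, ← MvPolynomial.map_map, map_mem_map_iff fun c hc f =>
    mem_map_map_C_of_C_mul_mem (nonZeroDivisors.ne_zero hc), map_C_mem_map_map_C_iff]

end RatFunc

end Transcendental

end PrimeUpTo

theorem prime_up_to_bound_implies_prime_general
    (k : Type*) [Field k] (n d : ℕ) (hn : 1 ≤ n) (hd : 1 ≤ d)
    (I : Ideal (MvPolynomial (Fin n) k)) (hproper : I ≠ ⊤)
    (S : Set (MvPolynomial (Fin n) k)) (hgen : I = Ideal.span S)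
    (hdeg : ∀ f ∈ S, f.totalDegree ≤ d)
    (hprime : PrimeUpTo.IsPrimeUpTo I ((2 * n * d) ^ (n * (n + 1) ^ 2 * 2 ^ (4 * n + 6)))) :
    I.IsPrime := by
  let K := FractionRing (Polynomial k)
  have : Infinite K := .of_injective _ (IsFractionRing.injective (Polynomial k) K)
  let φ : k →+* K := (algebraMap (Polynomial k) K).comp Polynomial.C
  obtain ⟨T, hTS, hT⟩ := (Submodule.fg_span_iff_fg_span_finset_subset S).1
    (IsNoetherian.noetherian (Ideal.span S))
  have hmap : I.map (MvPolynomial.map φ) =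
      Ideal.span (Set.range fun f : T => MvPolynomial.map φ f) := by
    rw [hgen, Ideal.span, hT, Ideal.map_span, Set.image_eq_range]
    rfl
  have hcomap : (I.map (MvPolynomial.map φ)).comap (MvPolynomial.map φ) = I :=
    PrimeUpTo.comap_map_algebraMap_comp_C I
  have hprimeK := hprime.map_algebraMap_comp_C (K := K)
  have hprime_map : (I.map (MvPolynomial.map φ)).IsPrime := by
    rw [hmap] at hprimeK ⊢
    refine hprimeK.isPrime_of_infinite_of_pow hn hd (fun f => ?_) fun htop => hproper ?_
    · exact (PrimeUpTo.totalDegree_map_of_injective φ.injective f.1).trans_le (hdeg f (hTS f.2))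
    · rw [← hcomap, hmap, htop, Ideal.comap_top]
  exact hcomap ▸ hprime_map.comap _

/-- If a proper ideal of `k[x₁,…,xₙ]` generated in degree at most `d`
is prime up to `max{(2d)^(2^(3n²+2n)), (2nd)^(n(n+1)²·2^(4n+6))}`, then it is prime. -/
theorem prime_up_to_bound_implies_prime
    (k : Type*) [Field k] (n d : ℕ) (hn : 1 ≤ n) (hd : 1 ≤ d)
    (I : Ideal (MvPolynomial (Fin n) k)) (hproper : I ≠ ⊤)
    (S : Set (MvPolynomial (Fin n) k)) (hgen : I = Ideal.span S)
    (hdeg : ∀ f ∈ S, f.totalDegree ≤ d)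
    (hprime : ∀ f g : MvPolynomial (Fin n) k,
      f.totalDegree ≤ max ((2 * d) ^ 2 ^ (3 * n ^ 2 + 2 * n))
          ((2 * n * d) ^ (n * (n + 1) ^ 2 * 2 ^ (4 * n + 6))) →
      g.totalDegree ≤ max ((2 * d) ^ 2 ^ (3 * n ^ 2 + 2 * n))
          ((2 * n * d) ^ (n * (n + 1) ^ 2 * 2 ^ (4 * n + 6))) →
      f * g ∈ I → f ∈ I ∨ g ∈ I) :
    I.IsPrime :=
  prime_up_to_bound_implies_prime_general k n d hn hd I hproper S hgen hdeg fun f g hf hg =>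
    hprime f g (hf.trans (le_max_right _ _)) (hg.trans (le_max_right _ _))
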